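/- arXiv:1112.5015 — 2 statements merged into one kernel-verified Lean document; each statement's English description precedes it below -/
import Mathlib

section
/- Let S = K[x_1,…,x_n]. For any Cohen-Macaulay standard graded K-algebra A with dim_K A_1 ≤ n, there is a stable monomial ideal J ⊂ S such that S/J is Cohen-Macaulay and S/J has the same Hilbert series as A. -/
open MvPolynomial

set_option synthInstance.maxHeartbeats 1000000
set_option maxHeartbeats 1000000

/-- A *stable* monomial ideal of `S = K[x₁,…,x_n]`: a monomial ideal `I` such that for every
monomial `m ∈ I`, letting `jmax = max(m)` be the largest index of a variable dividing `m`,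
one has `m · (x_i / x_{jmax}) ∈ I` for every `i < jmax`. -/
def IsStableMonomialIdeal {K : Type*} [CommSemiring K] {n : ℕ}
    (I : Ideal (MvPolynomial (Fin n) K)) : Prop :=
  (∃ M : Set (Fin n →₀ ℕ),
      I = Ideal.span ((fun m => (monomial m (1 : K) : MvPolynomial (Fin n) K)) '' M)) ∧
    ∀ m : Fin n →₀ ℕ, (monomial m (1 : K) : MvPolynomial (Fin n) K) ∈ I →
      ∀ jmax : Fin n, m jmax ≠ 0 → (∀ j, jmax < j → m j = 0) →
        ∀ i : Fin n, i < jmax →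
          (monomial (m + Finsupp.single i 1 - Finsupp.single jmax 1) (1 : K) :
            MvPolynomial (Fin n) K) ∈ I


namespace KM

/-- the line through `u` in direction `e_j - e_i`. -/
def linePt {m : ℕ} (i j : Fin m) (u : Fin m → ℕ) (a : ℕ) : Fin m → ℕ :=
  fun l => if l = i then a else if l = j then u i + u j - a else u l

lemma count_shift (P Q : ℕ → Prop) [DecidablePred P] [DecidablePred Q] (s : ℕ)
    (h1 : ∀ a < s, P a → Q a) (h2 : ∀ a < s, P (a + 1) → Q a) :
    Nat.count Q s = s ∨ Nat.count P (s + 1) ≤ Nat.count Q s := by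
  induction s with
  | zero => left; simp
  | succ s ih =>
    have h1s := h1 s (by omega)
    have h2s := h2 s (by omega)
    have hle := Nat.count_le (p := P) (n := s)
    rcases ih (fun a ha => h1 a (by omega)) (fun a ha => h2 a (by omega)) with h | h
    · by_cases hq : Q s
      · left; rw [Nat.count_succ, if_pos hq, h]
      · right
        have hp1 : ¬ P s := fun h => hq (h1s h)
        have hp2 : ¬ P (s+1) := fun h => hq (h2s h)
        rw [Nat.count_succ, Nat.count_succ, Nat.count_succ, if_neg hq, if_neg hp1, if_neg hp2]
        omega
    · right
      rw [Nat.count_succ, Nat.count_succ (p := Q)]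
      split_ifs with ha hb
      · omega
      · exact absurd (h2s ha) hb
      · omega
      · omega

lemma exists_count_eq (P : ℕ → Prop) [DecidablePred P] (N t : ℕ) (h : t < Nat.count P N) :
    ∃ a < N, P a ∧ Nat.count P a = t := by
  induction N with
  | zero => simp at h
  | succ N ih =>
    by_cases h' : t < Nat.count P N
    · obtain ⟨a, ha, h2⟩ := ih h'
      exact ⟨a, by omega, h2⟩
    · rw [Nat.count_succ] at h
      split_ifs at h with hp
      · exact ⟨N, by omega, hp, by omega⟩
      · omega

section
variable {m : ℕ} {i j : Fin m}

lemma linePt_i (u : Fin m → ℕ) (a : ℕ) : linePt i j u a i = a := by simp [linePt]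
lemma linePt_j (hij : i ≠ j) (u : Fin m → ℕ) (a : ℕ) : linePt i j u a j = u i + u j - a := by
  simp [linePt, hij.symm]
lemma linePt_self (u : Fin m → ℕ) : linePt i j u (u i) = u := by
  funext l; simp only [linePt]; split_ifs with h1 h2
  · rw [h1]
  · rw [h2]; omega
  · rfl
lemma linePt_linePt (hij : i ≠ j) (u : Fin m → ℕ) (a b : ℕ) (ha : a ≤ u i + u j) :
    linePt i j (linePt i j u a) b = linePt i j u b := by
  funext l; 
  by_cases h1 : l = i
  · simp [linePt, h1]
  · by_cases h2 : l = j
    · subst h2; rw [linePt_j hij, linePt_i, linePt_j hij, linePt_j hij]; omega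
    · simp [linePt, h1, h2]

lemma linePt_add (hij : i ≠ j) (u : Fin m → ℕ) (a : ℕ) (ha : a ≤ u i) :
    linePt i j u a + Pi.single i (u i - a) = u + Pi.single j (u i - a) := by
  funext l
  by_cases h1 : l = i
  · subst h1; simp [linePt_i, hij]; omega
  · by_cases h2 : l = j
    · subst h2; simp [linePt_j hij, hij.symm]; omega
    · simp [linePt, h1, h2]

lemma linePt_mono (hij : i ≠ j) (u w : Fin m → ℕ) (a b : ℕ) (hab : a ≤ b)
    (h2 : u i + u j - a ≤ w i + w j - b) (h : ∀ l, l ≠ i → l ≠ j → u l ≤ w l) :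
    linePt i j u a ≤ linePt i j w b := by
  intro l
  by_cases h1 : l = i
  · simpa [linePt, h1] using hab
  · by_cases h3 : l = j
    · subst h3; rw [linePt_j hij, linePt_j hij]; exact h2
    · simpa [linePt, h1, h3] using h l h1 h3

end

open Classical in
lemma compress_step {m : ℕ} (F : Finset (Fin m → ℕ)) (hF : IsLowerSet (F : Set (Fin m → ℕ)))
    (i j : Fin m) (hij : i < j) :
    ∃ Φ : (Fin m → ℕ) → (Fin m → ℕ), Set.InjOn Φ F ∧
      (∀ u, ∑ l, Φ u l = ∑ l, u l) ∧
      (∀ u, ∑ l : Fin m, (l : ℕ) * u l ≤ ∑ l : Fin m, (l : ℕ) * Φ u l) ∧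
      (∀ u, u i ≠ 0 → linePt i j u (u i - 1) ∉ F →
        ∑ l : Fin m, (l : ℕ) * u l < ∑ l : Fin m, (l : ℕ) * Φ u l) ∧
      IsLowerSet ((F.image Φ : Finset (Fin m → ℕ)) : Set (Fin m → ℕ)) := by
  have hne : i ≠ j := hij.ne
  let P : (Fin m → ℕ) → ℕ → Prop := fun u a => linePt i j u a ∈ F
  let r : (Fin m → ℕ) → ℕ := fun u => Nat.count (P u) (u i)
  have hr : ∀ u, r u ≤ u i := fun u => Nat.count_le _
  let Φ : (Fin m → ℕ) → (Fin m → ℕ) := fun u => linePt i j u (r u)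
  have hadd : ∀ u, Φ u + Pi.single i (u i - r u) = u + Pi.single j (u i - r u) :=
    fun u => linePt_add hne u _ (hr u)
  have hwt : ∀ u, ∑ l : Fin m, (l : ℕ) * Φ u l + (i : ℕ) * (u i - r u)
      = ∑ l : Fin m, (l : ℕ) * u l + (j : ℕ) * (u i - r u) := by
    intro u
    have := congrArg (fun f : Fin m → ℕ => ∑ l : Fin m, (l : ℕ) * f l) (hadd u)
    simpa [mul_add, Finset.sum_add_distrib, Pi.single_apply] using this
  have hPP : ∀ u a, a ≤ u i + u j → P (linePt i j u a) = P u := by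
    intro u a ha; funext b; simp only [P]; rw [linePt_linePt hne u a b ha]
  have hmem : ∀ w, w ∈ F.image Φ ↔ w i < Nat.count (P w) (w i + w j + 1) := by
    intro w
    rw [Finset.mem_image]
    constructor
    · rintro ⟨u, hu, rfl⟩
      have h1 : r u ≤ u i + u j := by have := hr u; omega
      have h2 : (Φ u) i = r u := linePt_i _ _
      have h3 : (Φ u) j = u i + u j - r u := linePt_j hne _ _
      rw [h2, h3]
      have h4 : P (Φ u) = P u := hPP u _ h1
      simp only [h4]
      have h5 : r u + (u i + u j - r u) + 1 = u i + u j + 1 := by omega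
      rw [h5]
      have h6 : P u (u i) := by simp only [P]; rwa [linePt_self]
      calc r u < Nat.count (P u) (u i + 1) := by
            rw [Nat.count_succ, if_pos h6]; exact Nat.lt_succ_self _
        _ ≤ _ := Nat.count_monotone _ (by omega)
    · intro h
      obtain ⟨a, ha, hPa, hc⟩ := exists_count_eq _ _ _ h
      refine ⟨linePt i j w a, hPa, ?_⟩
      have ha' : a ≤ w i + w j := by omega
      show linePt i j (linePt i j w a) (Nat.count (P (linePt i j w a)) (linePt i j w a i)) = w
      simp only [hPP w a ha', linePt_i]
      rw [hc, linePt_linePt hne w a _ ha', linePt_self]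
  refine ⟨Φ, ?_, ?_, ?_, ?_, ?_⟩
  · intro u hu v hv huv
    have hi := congrFun huv i
    have hj := congrFun huv j
    have hui : Φ u i = r u := linePt_i _ _
    have hvi : Φ v i = r v := linePt_i _ _
    have huj : Φ u j = u i + u j - r u := linePt_j hne _ _
    have hvj : Φ v j = v i + v j - r v := linePt_j hne _ _
    rw [hui, hvi] at hi
    rw [huj, hvj] at hj
    have hru := hr u
    have hrv := hr v
    have hPu : P (Φ u) = P u := hPP u _ (by omega)
    have hPv : P (Φ v) = P v := hPP v _ (by omega)
    have hPuv : P u = P v := by rw [← hPu, ← hPv, huv]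
    have e1 : P u (u i) := by simp only [P]; rw [linePt_self]; exact hu
    have e2 : P v (v i) := by simp only [P]; rw [linePt_self]; exact hv
    have : u i = v i := by
      have hi' : Nat.count (P u) (u i) = Nat.count (P v) (v i) := hi
      simp only [hPuv] at hi'
      exact Nat.count_injective (by rw [← hPuv]; exact e1) e2 hi'
    have h1 : linePt i j (Φ u) (u i) = u := by
      show linePt i j (linePt i j u _) _ = u
      rw [linePt_linePt hne _ _ _ (by omega), linePt_self]
    have h2 : linePt i j (Φ v) (v i) = v := by
      show linePt i j (linePt i j v _) _ = v
      rw [linePt_linePt hne _ _ _ (by omega), linePt_self]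
    rw [← h1, ← h2, huv, this]
  · intro u
    have := congrArg (fun f : Fin m → ℕ => ∑ l : Fin m, f l) (hadd u)
    simp [Finset.sum_add_distrib] at this
    exact this
  · intro u
    have := hwt u
    have h2 : (i : ℕ) * (u i - r u) ≤ (j : ℕ) * (u i - r u) :=
      Nat.mul_le_mul_right _ (by exact_mod_cast hij.le)
    omega
  · intro u hu hnot
    have := hwt u
    have hlt : r u < u i := by
      obtain ⟨t, ht⟩ := Nat.exists_eq_succ_of_ne_zero hu
      have hn : ¬ P u t := by
        have : u i - 1 = t := by omega
        rw [this] at hnot; exact hnot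
      show Nat.count (P u) (u i) < u i
      rw [ht, Nat.succ_eq_add_one, Nat.count_succ, if_neg hn]
      have := Nat.count_le (p := P u) (n := t)
      omega
    have h2 : (i : ℕ) * (u i - r u) < (j : ℕ) * (u i - r u) :=
      Nat.mul_lt_mul_of_pos_right (by exact_mod_cast hij) (by omega)
    omega
  · -- single-step lowering
    have step : ∀ w : Fin m → ℕ, ∀ l, w + Pi.single l 1 ∈ F.image Φ → w ∈ F.image Φ := by
      intro w l hw
      rw [hmem] at hw ⊢
      set w' := w + Pi.single l 1 with hw'
      have hle : ∀ l, w l ≤ w' l := fun l => by simp [hw']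
      by_cases hl : l ≠ i ∧ l ≠ j
      · have e1 : w' i = w i := by simp [hw', hl.1.symm]
        have e2 : w' j = w j := by simp [hw', hl.2.symm]
        rw [e1, e2] at hw
        refine lt_of_lt_of_le hw ?_
        apply Nat.count_mono_left
        intro a _ ha
        refine hF ?_ ha
        apply linePt_mono hne
        · exact le_rfl
        · rw [e1, e2]
        · intro l _ _; exact hle l
      · have hs : w' i + w' j = w i + w j + 1 := by
          by_cases h : l = i
          · subst h; simp [hw', hne.symm]; omega
          · have : l = j := by tauto
            subst this; simp [hw', hne]; omega
        have hii := hle i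
        have hlt := hw
        rw [hs] at hlt
        have c1 : ∀ a < w i + w j + 1, P w' a → P w a := by
          intro a ha hPa
          refine hF ?_ hPa
          apply linePt_mono hne _ _ _ _ le_rfl
          · omega
          · intro l _ _; exact hle l
        have c2 : ∀ a < w i + w j + 1, P w' (a + 1) → P w a := by
          intro a ha hPa
          refine hF ?_ hPa
          apply linePt_mono hne _ _ _ _ (by omega)
          · omega
          · intro l _ _; exact hle l
        rcases count_shift (P w') (P w) (w i + w j + 1) c1 c2 with h | h
        · rw [h]; omega
        · exact lt_of_le_of_lt hii (lt_of_lt_of_le hlt h)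
    have key : ∀ N : ℕ, ∀ v w : Fin m → ℕ, w ≤ v → ∑ l, v l = ∑ l, w l + N →
        v ∈ F.image Φ → w ∈ F.image Φ := by
      intro N
      induction N with
      | zero =>
        intro v w hwv hs hv
        have : w = v := by
          funext l
          exact (Finset.sum_eq_sum_iff_of_le (fun l _ => hwv l)).1 (by omega) l (Finset.mem_univ l)
        rwa [this]
      | succ N ih =>
        intro v w hwv hs hv
        obtain ⟨l, hl⟩ : ∃ l, w l < v l := by
          by_contra hcon
          push Not at hcon
          have := Finset.sum_le_sum (fun l (_ : l ∈ Finset.univ) => hcon l)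
          omega
        apply step w l
        apply ih v _ _ _ hv
        · intro k
          by_cases hk : k = l
          · subst hk; simpa using hl
          · simpa [hk] using hwv k
        · simp [Finset.sum_add_distrib]; omega
    intro v w hwv hv
    exact key (∑ l, v l - ∑ l, w l) v w hwv
      (by have := Finset.sum_le_sum (fun l (_ : l ∈ Finset.univ) => hwv l); omega) hv

open Classical in
/-- every finite multicomplex can be replaced by a (co-)strongly stable one. -/
theorem exists_costable {m : ℕ} (F : Finset (Fin m → ℕ))
    (hF : IsLowerSet (F : Set (Fin m → ℕ))) :
    ∃ G : Finset (Fin m → ℕ), IsLowerSet (G : Set (Fin m → ℕ)) ∧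
      (∀ k, (G.filter (fun u => ∑ l, u l = k)).card = (F.filter (fun u => ∑ l, u l = k)).card) ∧
      ∀ u ∈ G, ∀ i j : Fin m, i < j → u i ≠ 0 → linePt i j u (u i - 1) ∈ G := by
  let C : Set (Finset (Fin m → ℕ)) := {G | IsLowerSet (G : Set (Fin m → ℕ)) ∧
      (∀ k, (G.filter (fun u => ∑ l, u l = k)).card = (F.filter (fun u => ∑ l, u l = k)).card)}
  have hCfin : C.Finite := by
    let N := F.sup (fun u => ∑ l, u l)
    apply Set.Finite.subset
      (Finset.finite_toSet (Fintype.piFinset (fun _ : Fin m => Finset.range (N + 1))).powerset)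
    rintro G ⟨_, hG⟩
    rw [Finset.mem_coe, Finset.mem_powerset]
    intro u hu
    rw [Fintype.mem_piFinset]
    intro l
    rw [Finset.mem_range]
    have h1 : 0 < (F.filter (fun v => ∑ l, v l = ∑ l, u l)).card := by
      rw [← hG]; exact Finset.card_pos.2 ⟨u, by simp [hu]⟩
    obtain ⟨v, hv⟩ := Finset.card_pos.1 h1
    rw [Finset.mem_filter] at hv
    have h2 : ∑ l, v l ≤ N := Finset.le_sup (f := fun u : Fin m → ℕ => ∑ l, u l) hv.1
    have h3 : u l ≤ ∑ l, u l := Finset.single_le_sum (fun _ _ => Nat.zero_le _) (Finset.mem_univ l)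
    omega
  obtain ⟨G, hGC, hmax⟩ := Set.exists_max_image C
    (fun G => ∑ u ∈ G, ∑ l : Fin m, (l : ℕ) * u l) hCfin ⟨F, hF, fun _ => rfl⟩
  refine ⟨G, hGC.1, hGC.2, ?_⟩
  intro u hu i j hij hui
  by_contra hnot
  obtain ⟨Φ, hinj, hdeg, hw1, hw2, hlow⟩ := compress_step G hGC.1 i j hij
  have := hmax (G.image Φ) ⟨hlow, fun k => by
    rw [← hGC.2 k, Finset.filter_image, Finset.card_image_of_injOn]
    · simp only [hdeg]
    · exact hinj.mono (fun x hx => (Finset.mem_filter.1 hx).1)⟩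
  rw [Finset.sum_image hinj] at this
  exact absurd this (not_le.2 (Finset.sum_lt_sum (fun u _ => hw1 u) ⟨u, hu, hw2 u hui hnot⟩))

end KM


namespace KM

lemma greedy {K V ι : Type*} [Field K] [AddCommGroup V] [Module K V] [LinearOrder ι] [Finite ι]
    (v : ι → V) :
    Module.finrank K (Submodule.span K (Set.range v)) =
      Nat.card {i // v i ∉ Submodule.span K (v '' Set.Iio i)} := by
  classical
  have := Fintype.ofFinite ι
  have hspan : Submodule.span K (Set.range v) = Submodule.span K (Set.range
      (fun i : {i // v i ∉ Submodule.span K (v '' Set.Iio i)} => v i)) := by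
    apply le_antisymm
    · rw [Submodule.span_le]
      rintro _ ⟨i, rfl⟩
      induction i using WellFoundedLT.induction with
      | ind i ih =>
        by_cases h : v i ∈ Submodule.span K (v '' Set.Iio i)
        · refine (Submodule.span_le.2 ?_) h
          rintro _ ⟨j, hj, rfl⟩
          exact ih j hj
        · exact Submodule.subset_span ⟨⟨i, h⟩, rfl⟩
    · apply Submodule.span_mono
      rintro _ ⟨i, rfl⟩
      exact ⟨i, rfl⟩
  have hli : LinearIndependent K
      (fun i : {i // v i ∉ Submodule.span K (v '' Set.Iio i)} => v i) := by
    rw [Fintype.linearIndependent_iff]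
    intro g hg
    by_contra hcon
    push Not at hcon
    have hne : (Finset.univ.filter (fun i => g i ≠ 0)).Nonempty := by
      obtain ⟨i, hi⟩ := hcon; exact ⟨i, by simpa using hi⟩
    obtain ⟨i, hi, hmax⟩ := Finset.exists_max_image _ id hne
    simp only [Finset.mem_filter, Finset.mem_univ, true_and, id] at hi hmax
    apply i.2
    rw [← Finset.add_sum_erase _ _ (Finset.mem_univ i)] at hg
    have h1 : v i = ∑ x ∈ Finset.univ.erase i, (-(g i)⁻¹ * g x) • v x := by
      have : g i • v i = - ∑ x ∈ Finset.univ.erase i, g x • v x := eq_neg_of_add_eq_zero_left hg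
      calc v i = (g i)⁻¹ • (g i • v i) := by rw [smul_smul, inv_mul_cancel₀ hi, one_smul]
        _ = _ := by
          rw [this, smul_neg, Finset.smul_sum, ← Finset.sum_neg_distrib]
          refine Finset.sum_congr rfl fun x _ => ?_
          rw [smul_smul, neg_mul, neg_smul]
    rw [h1]
    refine Submodule.sum_mem _ fun x hx => ?_
    by_cases hgx : g x = 0
    · simp [hgx]
    · refine Submodule.smul_mem _ _ (Submodule.subset_span ⟨x, ?_, rfl⟩)
      have hxi : x ≠ i := (Finset.mem_erase.1 hx).1
      exact lt_of_le_of_ne (hmax x hgx) (fun h => hxi (Subtype.ext h))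
  rw [hspan, finrank_span_eq_card hli, Nat.card_eq_fintype_card]

lemma finite_deg {m : ℕ} (k : ℕ) : {u : Fin m → ℕ | ∑ l, u l = k}.Finite := by
  apply Set.Finite.subset
    (Finset.finite_toSet (Fintype.piFinset (fun _ : Fin m => Finset.range (k + 1))))
  intro u hu
  rw [Finset.mem_coe, Fintype.mem_piFinset]
  intro l
  have h3 : u l ≤ ∑ l, u l := Finset.single_le_sum (fun _ _ => Nat.zero_le _) (Finset.mem_univ l)
  rw [Finset.mem_range]
  have : ∑ l, u l = k := hu
  omega

open Classical in
theorem exists_standard {K B : Type*} [Field K] [CommRing B] [Algebra K B] {m : ℕ} (b : Fin m → B)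
    (N : ℕ) (hN : ∀ u : Fin m → ℕ, N ≤ ∑ l, u l → ∏ l, b l ^ u l = 0) :
    ∃ F : Finset (Fin m → ℕ), IsLowerSet (F : Set (Fin m → ℕ)) ∧
      ∀ k, (F.filter (fun u => ∑ l, u l = k)).card =
        Module.finrank K (Submodule.span K ((fun u : Fin m → ℕ => ∏ l, b l ^ u l) ''
          {u | ∑ l, u l = k})) := by
  let v : (Fin m → ℕ) → B := fun u => ∏ l, b l ^ u l
  have hv : ∀ u w, v (u + w) = v u * v w := by
    intro u w; simp [v, pow_add, Finset.prod_mul_distrib]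
  let S : Set (Fin m → ℕ) := {u | v u ∉ Submodule.span K
    (v '' {w | ∑ l, w l = ∑ l, u l ∧ toLex w < toLex u})}
  have hS : S.Finite := by
    apply Set.Finite.subset (Set.Finite.biUnion (Set.finite_Iio N) (fun k _ => finite_deg (m := m) k))
    intro u hu
    simp only [Set.mem_iUnion, Set.mem_Iio, Set.mem_ofPred_eq, exists_prop, exists_eq_right']
    by_contra hcon
    apply hu
    show v u ∈ _
    rw [show v u = 0 from hN u (by simpa using hcon)]
    exact Submodule.zero_mem _
  refine ⟨hS.toFinset, ?_, ?_⟩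
  · rw [Set.Finite.coe_toFinset]
    intro u u' hle hu hu'
    apply hu
    show v u ∈ _
    obtain ⟨w, rfl⟩ := exists_add_of_le hle
    rw [hv, mul_comm]
    have := Submodule.mem_map_of_mem (f := LinearMap.mulLeft K (v w)) hu'
    rw [Submodule.map_span] at this
    refine Submodule.span_mono ?_ this
    rintro _ ⟨_, ⟨x, ⟨hx1, hx2⟩, rfl⟩, rfl⟩
    refine ⟨x + w, ⟨?_, ?_⟩, ?_⟩
    · simp [Finset.sum_add_distrib, hx1]
    · rw [toLex_add, toLex_add]
      exact add_lt_add_left hx2 _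
    · rw [hv, mul_comm]; rfl
  · intro k
    let ι := {u : Lex (Fin m → ℕ) // ∑ l, ofLex u l = k}
    have : Finite ι := (finite_deg (m := m) k)
    have hg := greedy (K := K) (fun i : ι => v (ofLex i.1))
    have hr : Set.range (fun i : ι => v (ofLex i.1)) = v '' {u | ∑ l, u l = k} := by
      ext x; constructor
      · rintro ⟨i, rfl⟩; exact ⟨_, i.2, rfl⟩
      · rintro ⟨u, hu, rfl⟩; exact ⟨⟨toLex u, hu⟩, rfl⟩
    rw [hr] at hg
    show _ = Module.finrank K (Submodule.span K (v '' _))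
    have himg : ∀ i : ι, (fun i : ι => v (ofLex i.1)) '' Set.Iio i =
        v '' {w | ∑ l, w l = ∑ l, ofLex i.1 l ∧ toLex w < i.1} := by
      intro i
      ext x; constructor
      · rintro ⟨j, hj, rfl⟩
        exact ⟨ofLex j.1, ⟨j.2.trans i.2.symm, hj⟩, rfl⟩
      · rintro ⟨w, ⟨hw1, hw2⟩, rfl⟩
        exact ⟨⟨toLex w, hw1.trans i.2⟩, hw2, rfl⟩
    rw [hg, ← Fintype.card_coe, ← Nat.card_eq_fintype_card]
    refine Nat.card_congr
      { toFun := fun u => ⟨⟨toLex u.1, (Finset.mem_filter.1 u.2).2⟩, ?_⟩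
        invFun := fun i => ⟨ofLex i.1.1, ?_⟩
        left_inv := fun u => rfl
        right_inv := fun u => rfl }
    · have h := (Finset.mem_filter.1 u.2).1
      rw [himg]
      exact (Set.Finite.mem_toFinset _).1 h
    · rw [Finset.mem_filter, Set.Finite.mem_toFinset]
      refine ⟨?_, i.1.2⟩
      have h := i.2
      rw [himg] at h
      exact h

end KM


namespace KM

/-- Hilbert function of `A / I`. -/
noncomputable def hilb {K A : Type*} [Field K] [CommRing A] [Algebra K A]
    (𝒜 : ℕ → Submodule K A) (I : Ideal A) (k : ℕ) : ℕ :=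
  Module.finrank K (Submodule.map (Ideal.Quotient.mkₐ K I).toLinearMap (𝒜 k))

lemma finrank_map_eq_of_ker {K V W W' : Type*} [Field K] [AddCommGroup V] [Module K V]
    [AddCommGroup W] [Module K W] [AddCommGroup W'] [Module K W'] (f : V →ₗ[K] W) (g : V →ₗ[K] W')
    (P : Submodule K V) (h : ∀ x ∈ P, f x = 0 ↔ g x = 0) :
    Module.finrank K (P.map f) = Module.finrank K (P.map g) := by
  rw [← LinearMap.range_domRestrict, ← LinearMap.range_domRestrict]
  have hk : LinearMap.ker (f.domRestrict P) = LinearMap.ker (g.domRestrict P) := by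
    ext x; simpa using h x.1 x.2
  exact LinearEquiv.finrank_eq (((f.domRestrict P).quotKerEquivRange.symm.trans
    (Submodule.quotEquivOfEq _ _ hk)).trans (g.domRestrict P).quotKerEquivRange)

section
variable {K A : Type*} [Field K] [CommRing A] [Algebra K A]
    (𝒜 : ℕ → Submodule K A) [GradedAlgebra 𝒜]

/-- components of a product with a degree one element -/
lemma decompose_mul_one_succ {θ : A} (hθ : θ ∈ 𝒜 1) (a : A) (k : ℕ) :
    (DirectSum.decompose 𝒜 (θ * a) (k + 1) : A) = θ * DirectSum.decompose 𝒜 a k := by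
  rw [add_comm k 1]
  exact DirectSum.coe_decompose_mul_add_of_left_mem 𝒜 hθ

lemma mem_sup_iff {I : Ideal A} (hI : I.IsHomogeneous 𝒜) {θ : A} (hθ : θ ∈ 𝒜 1) (k : ℕ)
    {f : A} (hf : f ∈ 𝒜 (k + 1)) (h : f ∈ I ⊔ Ideal.span {θ}) :
    ∃ a ∈ 𝒜 k, f - θ * a ∈ I := by
  obtain ⟨g, hg, t, ht, rfl⟩ := Submodule.mem_sup.1 h
  obtain ⟨a, rfl⟩ := Ideal.mem_span_singleton'.1 ht
  refine ⟨DirectSum.decompose 𝒜 a k, SetLike.coe_mem _, ?_⟩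
  have h1 : (DirectSum.decompose 𝒜 (g + a * θ) (k+1) : A) = g + a * θ :=
    DirectSum.decompose_of_mem_same 𝒜 hf
  rw [← h1, DirectSum.decompose_add, DirectSum.add_apply, Submodule.coe_add, mul_comm a θ,
    decompose_mul_one_succ 𝒜 hθ, add_sub_cancel_right]
  exact hI _ hg

lemma mem_sup_zero {I : Ideal A} (hI : I.IsHomogeneous 𝒜) {θ : A} (hθ : θ ∈ 𝒜 1)
    {f : A} (hf : f ∈ 𝒜 0) (h : f ∈ I ⊔ Ideal.span {θ}) : f ∈ I := by
  obtain ⟨g, hg, t, ht, rfl⟩ := Submodule.mem_sup.1 h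
  obtain ⟨a, rfl⟩ := Ideal.mem_span_singleton'.1 ht
  have h1 : (DirectSum.decompose 𝒜 (g + a * θ) 0 : A) = g + a * θ :=
    DirectSum.decompose_of_mem_same 𝒜 hf
  have h2 : (DirectSum.decompose 𝒜 (θ * a) 0 : A) = 0 :=
    DirectSum.coe_decompose_mul_of_left_mem_of_not_le 𝒜 hθ (by omega)
  rw [← h1, DirectSum.decompose_add, DirectSum.add_apply, Submodule.coe_add, mul_comm a θ,
    h2, add_zero]
  exact hI _ hg

lemma isHomogeneous_sup {I : Ideal A} (hI : I.IsHomogeneous 𝒜) {θ : A} (hθ : θ ∈ 𝒜 1) :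
    (I ⊔ Ideal.span {θ}).IsHomogeneous 𝒜 := by
  apply Ideal.IsHomogeneous.sup hI
  apply Ideal.homogeneous_span
  rintro x rfl
  exact ⟨1, hθ⟩

lemma hilb_zero {I : Ideal A} (hI : I.IsHomogeneous 𝒜) {θ : A} (hθ : θ ∈ 𝒜 1) :
    hilb 𝒜 (I ⊔ Ideal.span {θ}) 0 = hilb 𝒜 I 0 := by
  apply finrank_map_eq_of_ker
  intro x hx
  simp only [AlgHom.toLinearMap_apply, Ideal.Quotient.mkₐ_eq_mk, Ideal.Quotient.eq_zero_iff_mem]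
  exact ⟨mem_sup_zero 𝒜 hI hθ hx, fun h => Ideal.mem_sup_left h⟩

lemma hilb_succ (hfin : ∀ i, Module.Finite K (𝒜 i)) {I : Ideal A} (hI : I.IsHomogeneous 𝒜)
    {θ : A} (hθ : θ ∈ 𝒜 1) (hreg : ∀ f, θ * f ∈ I → f ∈ I) (k : ℕ) :
    hilb 𝒜 I (k + 1) = hilb 𝒜 I k + hilb 𝒜 (I ⊔ Ideal.span {θ}) (k + 1) := by
  let q : (A ⧸ I) →ₗ[K] (A ⧸ (I ⊔ Ideal.span {θ})) :=
    (Ideal.Quotient.factorₐ K (le_sup_left : I ≤ I ⊔ Ideal.span {θ})).toLinearMap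
  let M := Submodule.map (Ideal.Quotient.mkₐ K I).toLinearMap (𝒜 (k + 1))
  have := hfin (k + 1)
  have hMfin : Module.Finite K M := inferInstance
  have h1 := LinearMap.finrank_range_add_finrank_ker (q.domRestrict M)
  have hr : LinearMap.range (q.domRestrict M) =
      Submodule.map (Ideal.Quotient.mkₐ K (I ⊔ Ideal.span {θ})).toLinearMap (𝒜 (k + 1)) := by
    rw [LinearMap.range_domRestrict, ← Submodule.map_comp]
    rfl
  have hk : Module.finrank K (LinearMap.ker (q.domRestrict M)) = hilb 𝒜 I k := by
    rw [← Submodule.finrank_map_subtype_eq]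
    have : hilb 𝒜 I k = Module.finrank K (Submodule.map
        ((Ideal.Quotient.mkₐ K I).toLinearMap ∘ₗ LinearMap.mulLeft K θ) (𝒜 k)) := by
      apply finrank_map_eq_of_ker
      intro x hx
      simp only [AlgHom.toLinearMap_apply, Ideal.Quotient.mkₐ_eq_mk,
        Ideal.Quotient.eq_zero_iff_mem, LinearMap.comp_apply, LinearMap.mulLeft_apply]
      exact ⟨fun h => I.mul_mem_left _ h, hreg x⟩
    rw [this]
    refine congrArg (fun P : Submodule K (A ⧸ I) => Module.finrank K P) ?_
    ext y
    constructor
    · rintro ⟨⟨y, hy⟩, hy2, rfl⟩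
      obtain ⟨f, hf, rfl⟩ := hy
      have hfm : f ∈ I ⊔ Ideal.span {θ} := by
        rw [← Ideal.Quotient.eq_zero_iff_mem]
        simpa [q] using hy2
      obtain ⟨a, ha, haI⟩ := mem_sup_iff 𝒜 hI hθ k hf hfm
      refine ⟨a, ha, ?_⟩
      simp only [LinearMap.comp_apply, AlgHom.toLinearMap_apply, Ideal.Quotient.mkₐ_eq_mk,
        LinearMap.mulLeft_apply, Submodule.subtype_apply]
      exact ((Ideal.Quotient.mk_eq_mk_iff_sub_mem _ _).2 haI).symm
    · rintro ⟨a, ha, rfl⟩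
      have hmem : θ * a ∈ 𝒜 (k + 1) := by
        rw [add_comm]; exact SetLike.GradedMul.mul_mem hθ ha
      refine ⟨⟨Ideal.Quotient.mk I (θ * a), ⟨θ * a, hmem, rfl⟩⟩, ?_, rfl⟩
      show q (Ideal.Quotient.mk I (θ * a)) = 0
      show Ideal.Quotient.mk (I ⊔ Ideal.span {θ}) (θ * a) = 0
      rw [Ideal.Quotient.eq_zero_iff_mem]
      exact Ideal.mul_mem_right _ _ (Ideal.mem_sup_right (Ideal.mem_span_singleton_self θ))
  rw [hr, hk] at h1
  unfold hilb at *
  show Module.finrank K M = _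
  omega
end

/-- `J + (θ_0, …, θ_{i-1})`. -/
def chainI {A : Type*} [CommRing A] (J : Ideal A) {d : ℕ} (θ : Fin d → A) (i : ℕ) : Ideal A :=
  J ⊔ Ideal.span (θ '' {j | (j : ℕ) < i})

lemma chainI_zero {A : Type*} [CommRing A] (J : Ideal A) {d : ℕ} (θ : Fin d → A) :
    chainI J θ 0 = J := by simp [chainI]

lemma chainI_succ {A : Type*} [CommRing A] (J : Ideal A) {d : ℕ} (θ : Fin d → A) (i : Fin d) :
    chainI J θ (i + 1) = chainI J θ i ⊔ Ideal.span {θ i} := by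
  unfold chainI
  rw [sup_assoc, ← Ideal.span_union]
  congr 2
  ext x
  constructor
  · rintro ⟨j, hj, rfl⟩
    rcases Nat.lt_succ_iff_lt_or_eq.1 hj with h | h
    · left; exact ⟨j, h, rfl⟩
    · right; rw [Fin.ext h]; rfl
  · rintro (⟨j, hj, rfl⟩ | rfl)
    · exact ⟨j, Nat.lt_succ_of_lt hj, rfl⟩
    · exact ⟨i, Nat.lt_succ_self _, rfl⟩

lemma chainI_top {A : Type*} [CommRing A] (J : Ideal A) {d : ℕ} (θ : Fin d → A) :
    chainI J θ d = J ⊔ Ideal.span (Set.range θ) := by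
  unfold chainI
  congr 2
  ext x; simp

lemma chainI_homog {K A : Type*} [Field K] [CommRing A] [Algebra K A]
    (𝒜 : ℕ → Submodule K A) [GradedAlgebra 𝒜] (J : Ideal A) (hJ : J.IsHomogeneous 𝒜)
    {d : ℕ} (θ : Fin d → A) (hθ : ∀ j, θ j ∈ 𝒜 1) (i : ℕ) :
    (chainI J θ i).IsHomogeneous 𝒜 := by
  apply Ideal.IsHomogeneous.sup hJ
  apply Ideal.homogeneous_span
  rintro x ⟨j, _, rfl⟩
  exact ⟨1, hθ j⟩

theorem hilb_determined {K A A' : Type*} [Field K] [CommRing A] [Algebra K A]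
    (𝒜 : ℕ → Submodule K A) [GradedAlgebra 𝒜] (hfin : ∀ i, Module.Finite K (𝒜 i))
    [CommRing A'] [Algebra K A']
    (𝒜' : ℕ → Submodule K A') [GradedAlgebra 𝒜'] (hfin' : ∀ i, Module.Finite K (𝒜' i))
    (J : Ideal A) (hJ : J.IsHomogeneous 𝒜) (J' : Ideal A') (hJ' : J'.IsHomogeneous 𝒜')
    {d : ℕ} (θ : Fin d → A) (hθ : ∀ j, θ j ∈ 𝒜 1) (θ' : Fin d → A') (hθ' : ∀ j, θ' j ∈ 𝒜' 1)
    (hreg : ∀ i : Fin d, ∀ f, θ i * f ∈ chainI J θ i → f ∈ chainI J θ i)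
    (hreg' : ∀ i : Fin d, ∀ f, θ' i * f ∈ chainI J' θ' i → f ∈ chainI J' θ' i)
    (heq : ∀ k, hilb 𝒜 (chainI J θ d) k = hilb 𝒜' (chainI J' θ' d) k) (k : ℕ) :
    hilb 𝒜 J k = hilb 𝒜' J' k := by
  have key : ∀ i (hi : i ≤ d), ∀ k, hilb 𝒜 (chainI J θ i) k = hilb 𝒜' (chainI J' θ' i) k := by
    intro i hi
    induction hi using Nat.decreasingInduction with
    | self => exact heq
    | of_succ i hi ih =>
      let i' : Fin d := ⟨i, hi⟩
      have e1 := chainI_succ J θ i'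
      have e2 := chainI_succ J' θ' i'
      have H := chainI_homog 𝒜 J hJ θ hθ i
      have H' := chainI_homog 𝒜' J' hJ' θ' hθ' i
      intro k
      induction k with
      | zero =>
        have := ih 0
        rw [show i + 1 = (i' : ℕ) + 1 from rfl, e1, e2, hilb_zero 𝒜 H (hθ i'),
          hilb_zero 𝒜' H' (hθ' i')] at this
        exact this
      | succ k ihk =>
        rw [hilb_succ 𝒜 hfin H (hθ i') (hreg i'), hilb_succ 𝒜' hfin' H' (hθ' i') (hreg' i'), ihk]
        have := ih (k + 1)
        rw [show i + 1 = (i' : ℕ) + 1 from rfl, e1, e2] at this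
        rw [this]
  simpa [chainI_zero] using key 0 (Nat.zero_le _) k

/-- degree one part -/
theorem hilb_one {K A : Type*} [Field K] [CommRing A] [Algebra K A]
    (𝒜 : ℕ → Submodule K A) [GradedAlgebra 𝒜] (hfin : ∀ i, Module.Finite K (𝒜 i))
    (J : Ideal A) (hJ : J.IsHomogeneous 𝒜)
    {d : ℕ} (θ : Fin d → A) (hθ : ∀ j, θ j ∈ 𝒜 1)
    (hreg : ∀ i : Fin d, ∀ f, θ i * f ∈ chainI J θ i → f ∈ chainI J θ i)
    (h0 : hilb 𝒜 J 0 = 1) :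
    hilb 𝒜 J 1 = hilb 𝒜 (chainI J θ d) 1 + d := by
  have key : ∀ i (hi : i ≤ d), hilb 𝒜 (chainI J θ i) 0 = 1 ∧
      hilb 𝒜 J 1 = hilb 𝒜 (chainI J θ i) 1 + i := by
    intro i
    induction i with
    | zero => intro _; rw [chainI_zero]; exact ⟨h0, rfl⟩
    | succ i ih =>
      intro hi
      obtain ⟨h1, h2⟩ := ih (by omega)
      let i' : Fin d := ⟨i, hi⟩
      have e1 := chainI_succ J θ i'
      have H := chainI_homog 𝒜 J hJ θ hθ i
      rw [show i + 1 = (i' : ℕ) + 1 from rfl, e1]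
      refine ⟨(hilb_zero 𝒜 H (hθ i')).trans h1, ?_⟩
      have := hilb_succ 𝒜 hfin H (hθ i') (hreg i') 0
      rw [h1] at this
      rw [h2, this]
      show 1 + hilb 𝒜 (chainI J θ i ⊔ Ideal.span {θ i'}) 1 + i =
        hilb 𝒜 (chainI J θ i ⊔ Ideal.span {θ i'}) 1 + (i + 1)
      omega
  exact (key d le_rfl).2

lemma isWeaklyRegular_iff {R : Type*} [CommRing R] {d : ℕ} (θ : Fin d → R) :
    RingTheory.Sequence.IsWeaklyRegular R (List.ofFn θ) ↔
      ∀ i : Fin d, ∀ f, θ i * f ∈ chainI ⊥ θ i → f ∈ chainI ⊥ θ i := by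
  have htake : ∀ i : Fin d, Ideal.ofList ((List.ofFn θ).take i) = chainI ⊥ θ i := by
    intro i
    unfold Ideal.ofList chainI
    rw [bot_sup_eq]
    congr 1
    ext x
    rw [Set.mem_ofPred_eq, List.mem_take_iff_getElem]
    constructor
    · rintro ⟨j, hj, rfl⟩
      rw [List.length_ofFn] at hj
      refine ⟨⟨j, by omega⟩, ?_, ?_⟩
      · show j < (i:ℕ); omega
      · simp
    · rintro ⟨j, hj, rfl⟩
      have hj' : (j : ℕ) < i := hj
      exact ⟨j, by rw [List.length_ofFn]; omega, by simp⟩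
  rw [RingTheory.Sequence.isWeaklyRegular_iff_Fin]
  have hgen : ∀ (I : Ideal R) (r : R), IsSMulRegular (R ⧸ (I • ⊤ : Submodule R R)) r ↔
      ∀ f, r * f ∈ I → f ∈ I := by
    intro I r
    rw [show (I • ⊤ : Submodule R R) = I by simp, isSMulRegular_quotient_iff_mem_of_smul_mem]
    rfl
  constructor
  · intro h i
    have := (hgen _ _).1 (h ⟨i, by simp⟩)
    rw [htake i] at this
    simpa using this
  · intro h i
    rw [hgen]
    have hi : (i : ℕ) < d := by simpa using i.2
    have h2 := htake ⟨i, hi⟩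
    simp only at h2
    rw [h2]
    have := h ⟨i, hi⟩
    simpa using this

lemma isWeaklyRegular_quot_iff {R : Type*} [CommRing R] (J : Ideal R) {d : ℕ} (θ : Fin d → R) :
    RingTheory.Sequence.IsWeaklyRegular (R ⧸ J) (List.ofFn (fun i => Ideal.Quotient.mk J (θ i))) ↔
      ∀ i : Fin d, ∀ f, θ i * f ∈ chainI J θ i → f ∈ chainI J θ i := by
  rw [isWeaklyRegular_iff]
  have hm : ∀ (i : ℕ) (f : R), Ideal.Quotient.mk J f ∈
      chainI ⊥ (fun i => Ideal.Quotient.mk J (θ i)) i ↔ f ∈ chainI J θ i := by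
    intro i f
    unfold chainI
    rw [bot_sup_eq, show (fun i => Ideal.Quotient.mk J (θ i)) = (Ideal.Quotient.mk J) ∘ θ from rfl,
      Set.image_comp, ← Ideal.map_span, Ideal.mem_quotient_iff_mem_sup, sup_comm]
  refine forall_congr' fun i => ?_
  constructor
  · intro h f hf
    rw [← hm]; apply h; rw [← map_mul, hm]; exact hf
  · intro h f hf
    obtain ⟨f, rfl⟩ := Ideal.Quotient.mk_surjective f
    rw [← map_mul, hm] at hf
    rw [hm]; exact h f hf

end KM


namespace KM

/-- `dim A/I ≤ r` in terms of chains of primes. -/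
def dimLE {A : Type*} [CommRing A] (I : Ideal A) (r : ℕ) : Prop :=
  ∀ p : LTSeries (PrimeSpectrum A), I ≤ p.head.asIdeal → p.length ≤ r

lemma dimLE_step {K A : Type*} [Field K] [Infinite K] [CommRing A] [Algebra K A]
    [IsNoetherianRing A]
    (V : Submodule K A) (hV : ∀ P : Ideal A, P.IsPrime → (∀ x ∈ V, x ∈ P) → P.IsMaximal)
    (I : Ideal A) (r : ℕ) (h : dimLE I r) : ∃ θ ∈ V, dimLE (Ideal.span {θ} ⊔ I) (r - 1) := by
  classical
  have hfin : {P ∈ I.minimalPrimes | ¬ ∀ x ∈ V, x ∈ P}.Finite :=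
    (Ideal.finite_minimalPrimes_of_isNoetherianRing A I).subset (fun P hP => hP.1)
  obtain ⟨θ, hθV, hθ⟩ : ∃ θ ∈ V, ∀ P ∈ {P ∈ I.minimalPrimes | ¬ ∀ x ∈ V, x ∈ P}, θ ∉ P := by
    let s : Finset (Submodule K V) :=
      hfin.toFinset.image (fun P => (P.restrictScalars K).comap V.subtype)
    have hs : (⊤ : Submodule K V) ∉ s := by
      intro hmem
      obtain ⟨P, hP, htop⟩ := Finset.mem_image.1 hmem
      rw [Set.Finite.mem_toFinset] at hP
      apply hP.2
      intro x hx
      have : (⟨x, hx⟩ : V) ∈ (P.restrictScalars K).comap V.subtype := by rw [htop]; trivial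
      exact this
    have := Subspace.biUnion_ne_univ_of_top_notMem hs
    obtain ⟨θ, hθ⟩ := (Set.ne_univ_iff_exists_notMem _).1 this
    refine ⟨θ.1, θ.2, fun P hP hmem => hθ ?_⟩
    simp only [Set.mem_iUnion]
    exact ⟨_, Finset.mem_image.2 ⟨P, hfin.mem_toFinset.2 hP, rfl⟩, hmem⟩
  refine ⟨θ, hθV, ?_⟩
  intro p hp
  have hθp : θ ∈ p.head.asIdeal := hp (Ideal.mem_sup_left (Ideal.mem_span_singleton_self θ))
  obtain ⟨Q, hQ, hQle⟩ := Ideal.exists_minimalPrimes_le (le_trans le_sup_right hp)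
  by_cases hVQ : ∀ x ∈ V, x ∈ Q
  · have hQmax := hV Q hQ.1.1 hVQ
    have heq : Q = p.head.asIdeal := hQmax.eq_of_le p.head.2.ne_top hQle
    by_contra hlen
    have hlen : 0 < p.length := by omega
    have h01 : p.head < p.last :=
      p.strictMono (show (0 : Fin (p.length + 1)) < Fin.last p.length from Fin.mk_lt_mk.2 hlen)
    have hlt : Q < p.last.asIdeal := by rw [heq]; exact h01
    exact p.last.2.ne_top (hQmax.1.2 _ hlt)
  · have hθQ : θ ∉ Q := hθ Q ⟨hQ, hVQ⟩
    have hlt : (⟨Q, hQ.1.1⟩ : PrimeSpectrum A) < p.head := by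
      refine lt_of_le_of_ne hQle ?_
      intro heq
      apply hθQ
      rw [← heq] at hθp
      exact hθp
    have := h (p.cons ⟨Q, hQ.1.1⟩ hlt) (by simpa using hQ.1.2)
    simp at this
    omega

theorem exists_lsop {K A : Type*} [Field K] [Infinite K] [CommRing A] [Algebra K A]
    [Algebra.FiniteType K A]
    (V : Submodule K A) (hV : ∀ P : Ideal A, P.IsPrime → (∀ x ∈ V, x ∈ P) → P.IsMaximal)
    (d : ℕ) (hd : ringKrullDim A = d) :
    ∃ θ : Fin d → A, (∀ j, θ j ∈ V) ∧ Module.Finite K (A ⧸ Ideal.span (Set.range θ)) := by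
  have : IsNoetherianRing A := Algebra.FiniteType.isNoetherianRing K A
  have key : ∀ i, ∃ θ : Fin i → A, (∀ j, θ j ∈ V) ∧ dimLE (Ideal.span (Set.range θ)) (d - i) := by
    intro i
    induction i with
    | zero =>
      refine ⟨Fin.elim0, fun j => j.elim0, ?_⟩
      intro p _
      have := Order.LTSeries.length_le_krullDim p
      rw [show Order.krullDim (PrimeSpectrum A) = d from hd] at this
      exact_mod_cast this
    | succ i ih =>
      obtain ⟨θ, hθ, hdim⟩ := ih
      obtain ⟨t, ht, hdim'⟩ := dimLE_step V hV _ _ hdim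
      refine ⟨Fin.cons t θ, ?_, ?_⟩
      · intro j
        refine Fin.cases ?_ (fun j => ?_) j
        · exact ht
        · exact hθ j
      · rw [Fin.range_cons, Ideal.span_insert]
        exact hdim'
  obtain ⟨θ, hθ, hdim⟩ := key d
  refine ⟨θ, hθ, ?_⟩
  rw [Module.finite_iff_krullDimLE_zero]
  apply Ring.KrullDimLE.mk₀
  intro P hP
  let Q : Ideal A := P.comap (Ideal.Quotient.mk (Ideal.span (Set.range θ)))
  have hQ : Q.IsPrime := Ideal.IsPrime.comap _
  have hQmax : Q.IsMaximal := by
    obtain ⟨M, hM, hle⟩ := Q.exists_le_maximal hQ.ne_top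
    have : Q = M := by
      by_contra hne
      have hlt : (⟨Q, hQ⟩ : PrimeSpectrum A) < ⟨M, hM.isPrime⟩ := lt_of_le_of_ne hle (fun h => hne (congrArg PrimeSpectrum.asIdeal h))
      let p : LTSeries (PrimeSpectrum A) :=
        RelSeries.cons (RelSeries.singleton _ (⟨M, hM.isPrime⟩ : PrimeSpectrum A)) ⟨Q, hQ⟩ hlt
      have := hdim p (by
        show _ ≤ Q
        intro x hx
        show Ideal.Quotient.mk _ x ∈ P
        rw [Ideal.Quotient.eq_zero_iff_mem.2 hx]; exact P.zero_mem)
      have hl : p.length = 1 := rfl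
      omega
    rw [this]; exact hM
  have := Ideal.map_eq_top_or_isMaximal_of_surjective (Ideal.Quotient.mk (Ideal.span (Set.range θ)))
    Ideal.Quotient.mk_surjective hQmax
  rw [Ideal.map_comap_of_surjective _ Ideal.Quotient.mk_surjective] at this
  exact this.resolve_left hP.ne_top

open Pointwise in
lemma adjoin_top {K A : Type*} [Field K] [CommRing A] [Algebra K A]
    (𝒜 : ℕ → Submodule K A) [GradedAlgebra 𝒜] (hstd : ∀ i, 𝒜 i = 𝒜 1 ^ i) :
    Algebra.adjoin K (𝒜 1 : Set A) = ⊤ := by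
  classical
  rw [eq_top_iff]
  intro x _
  rw [← DirectSum.sum_support_decompose 𝒜 x]
  refine Subalgebra.sum_mem _ fun i _ => ?_
  have h : ∀ i, 𝒜 1 ^ i ≤ (Algebra.adjoin K (𝒜 1 : Set A)).toSubmodule := by
    intro i
    rw [Algebra.adjoin_eq_span]
    calc 𝒜 1 ^ i = (Submodule.span K (𝒜 1 : Set A)) ^ i := by rw [Submodule.span_eq]
      _ = Submodule.span K ((𝒜 1 : Set A) ^ i) := Submodule.span_pow _ _
      _ ≤ _ := Submodule.span_mono (Submonoid.pow_subset Submonoid.subset_closure)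
  apply h i
  rw [← hstd]
  exact SetLike.coe_mem _

lemma finiteType_std {K A : Type*} [Field K] [CommRing A] [Algebra K A]
    (𝒜 : ℕ → Submodule K A) [GradedAlgebra 𝒜] (hstd : ∀ i, 𝒜 i = 𝒜 1 ^ i)
    (hfin : Module.Finite K (𝒜 1)) : Algebra.FiniteType K A := by
  obtain ⟨s, hs⟩ := (Module.Finite.iff_fg.1 hfin)
  refine ⟨s, ?_⟩
  rw [eq_top_iff, ← adjoin_top 𝒜 hstd, ← hs]
  exact Algebra.adjoin_le (Algebra.span_le_adjoin K _)

lemma prime_maximal {K A : Type*} [Field K] [CommRing A] [Algebra K A]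
    (𝒜 : ℕ → Submodule K A) [GradedAlgebra 𝒜] (hstd : ∀ i, 𝒜 i = 𝒜 1 ^ i)
    (P : Ideal A) (hP : P.IsPrime) (h : ∀ x ∈ 𝒜 1, x ∈ P) : P.IsMaximal := by
  have hsurj : Function.Surjective (algebraMap K (A ⧸ P)) := by
    have hb : (Ideal.Quotient.mkₐ K P).range = ⊥ := by
      rw [← Algebra.map_top, ← adjoin_top 𝒜 hstd, AlgHom.map_adjoin, eq_bot_iff, Algebra.adjoin_le_iff]
      rintro _ ⟨x, hx, rfl⟩
      have : Ideal.Quotient.mkₐ K P x = 0 := Ideal.Quotient.eq_zero_iff_mem.2 (h x hx)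
      rw [this]; exact Subalgebra.zero_mem _
    intro y
    obtain ⟨x, rfl⟩ := Ideal.Quotient.mk_surjective y
    have : Ideal.Quotient.mkₐ K P x ∈ (Ideal.Quotient.mkₐ K P).range := ⟨x, rfl⟩
    rw [hb, Algebra.mem_bot] at this
    exact this
  apply Ideal.Quotient.maximal_of_isField
  have hinj : Function.Injective (algebraMap K (A ⧸ P)) := (algebraMap K (A ⧸ P)).injective
  exact (RingEquiv.ofBijective (algebraMap K (A ⧸ P)) ⟨hinj, hsurj⟩).symm.toMulEquiv.isField (Field.toIsField K)

end KM

open MvPolynomial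

namespace KM

/-- monomial ideal spanned by a set of exponents -/
noncomputable def upIdeal (K : Type*) [Field K] {n : ℕ} (U : Set (Fin n →₀ ℕ)) :
    Ideal (MvPolynomial (Fin n) K) :=
  Ideal.span ((fun m => (monomial m (1 : K) : MvPolynomial (Fin n) K)) '' U)

section
variable {K : Type*} [Field K] {n : ℕ} {U : Set (Fin n →₀ ℕ)}

lemma mem_upIdeal (hU : IsUpperSet U) (f : MvPolynomial (Fin n) K) :
    f ∈ upIdeal K U ↔ ∀ u ∈ f.support, u ∈ U := by
  unfold upIdeal
  rw [mem_ideal_span_monomial_image]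
  refine forall₂_congr fun u _ => ?_
  exact ⟨fun ⟨s, hs, hle⟩ => hU hle hs, fun h => ⟨u, h, le_rfl⟩⟩

lemma monomial_mem_upIdeal (hU : IsUpperSet U) (u : Fin n →₀ ℕ) :
    (monomial u (1 : K)) ∈ upIdeal K U ↔ u ∈ U := by
  classical
  rw [mem_upIdeal hU, support_monomial, if_neg one_ne_zero]
  simp

noncomputable instance gradedS : GradedAlgebra (homogeneousSubmodule (Fin n) K) :=
  MvPolynomial.gradedAlgebra

lemma upIdeal_homog : (upIdeal K U).IsHomogeneous (homogeneousSubmodule (Fin n) K) := by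
  apply Ideal.homogeneous_span
  rintro _ ⟨u, _, rfl⟩
  exact ⟨u.degree, isHomogeneous_monomial _ rfl⟩

lemma finite_degree (k : ℕ) : {u : Fin n →₀ ℕ | u.degree = k}.Finite := by
  have := finite_deg (m := n) k
  refine Set.Finite.of_finite_image (f := fun u => (u : Fin n → ℕ)) (this.subset ?_)
    (DFunLike.coe_injective.injOn)
  rintro _ ⟨u, hu, rfl⟩
  show ∑ l, u l = k
  rw [← Finsupp.degree_eq_sum]; exact hu

instance finite_homog (k : ℕ) : Module.Finite K (homogeneousSubmodule (Fin n) K k) := by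
  have : Finite {u : Fin n →₀ ℕ // u.degree = k} := finite_degree k
  let π : MvPolynomial (Fin n) K →ₗ[K] ({u : Fin n →₀ ℕ // u.degree = k} → K) :=
    LinearMap.pi (fun u => lcoeff K u.1)
  refine Module.Finite.of_injective (π.domRestrict (homogeneousSubmodule (Fin n) K k)) ?_
  rw [← LinearMap.ker_eq_bot, LinearMap.ker_eq_bot']
  intro f hf
  apply Subtype.ext
  ext u
  by_contra hne
  have hdeg : u.degree = k := by
    have := f.2 hne
    rwa [Finsupp.degree_eq_weight_one]
  exact hne (congrFun hf ⟨u, hdeg⟩)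

lemma hilb_upIdeal (hU : IsUpperSet U) (k : ℕ) :
    hilb (homogeneousSubmodule (Fin n) K) (upIdeal K U) k =
      Nat.card {u : Fin n →₀ ℕ // u.degree = k ∧ u ∉ U} := by
  have hfin : Finite {u : Fin n →₀ ℕ // u.degree = k ∧ u ∉ U} :=
    ((finite_degree k).subset (fun u hu => hu.1) :
      {u : Fin n →₀ ℕ | u.degree = k ∧ u ∉ U}.Finite)
  have := Fintype.ofFinite {u : Fin n →₀ ℕ // u.degree = k ∧ u ∉ U}
  let π : MvPolynomial (Fin n) K →ₗ[K] ({u : Fin n →₀ ℕ // u.degree = k ∧ u ∉ U} → K) :=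
    LinearMap.pi (fun u => lcoeff K u.1)
  have h1 : hilb (homogeneousSubmodule (Fin n) K) (upIdeal K U) k =
      Module.finrank K (Submodule.map π (homogeneousSubmodule (Fin n) K k)) := by
    apply finrank_map_eq_of_ker
    intro f hf
    simp only [AlgHom.toLinearMap_apply, Ideal.Quotient.mkₐ_eq_mk, Ideal.Quotient.eq_zero_iff_mem]
    rw [mem_upIdeal hU]
    constructor
    · intro h
      funext u
      by_contra hne
      exact u.2.2 (h u.1 (mem_support_iff.2 hne))
    · intro h u hu
      by_contra hne
      have hdeg : u.degree = k := by
        have := hf (mem_support_iff.1 hu)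
        rwa [Finsupp.degree_eq_weight_one]
      exact mem_support_iff.1 hu (congrFun h ⟨u, hdeg, hne⟩)
  have h2 : Submodule.map π (homogeneousSubmodule (Fin n) K k) = ⊤ := by
    classical
    rw [eq_top_iff]
    intro g _
    refine ⟨∑ u, monomial u.1 (g u), ?_, ?_⟩
    · refine Submodule.sum_mem _ fun u _ => ?_
      exact isHomogeneous_monomial _ u.2.1
    · funext v
      show coeff v.1 (∑ u, monomial u.1 (g u)) = g v
      rw [coeff_sum, Finset.sum_eq_single v]
      · simp
      · intro u _ huv
        rw [coeff_monomial, if_neg (fun h => huv (Subtype.ext h))]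
      · simp
  rw [h1, h2, finrank_top, Module.finrank_fintype_fun_eq_card, Nat.card_eq_fintype_card]

end

/-- restriction of an exponent to the first `m` variables -/
def rho {m d : ℕ} (u : Fin (m + d) →₀ ℕ) : Fin m → ℕ := fun l => u (Fin.castAdd d l)

/-- the chain of exponent sets -/
def chU {m d : ℕ} (G : Finset (Fin m → ℕ)) (i : ℕ) : Set (Fin (m + d) →₀ ℕ) :=
  {u | rho u ∉ G ∨ ∃ j : Fin d, (j : ℕ) < i ∧ u (Fin.natAdd m j) ≠ 0}

section
variable {K : Type*} [Field K] {m d : ℕ} {G : Finset (Fin m → ℕ)}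

lemma chU_upper (hG : IsLowerSet (G : Set (Fin m → ℕ))) (i : ℕ) :
    IsUpperSet (chU (d := d) G i) := by
  intro u v huv hu
  rcases hu with h | ⟨j, hj, h⟩
  · left
    intro hv
    exact h (hG (fun l => huv _) hv)
  · right
    refine ⟨j, hj, ?_⟩
    have := huv (Fin.natAdd m j)
    omega

lemma mem_chU_zero (u : Fin (m + d) →₀ ℕ) : u ∈ chU G 0 ↔ rho u ∉ G := by
  simp [chU]

lemma chain_eq (hG : IsLowerSet (G : Set (Fin m → ℕ))) (i : ℕ) :
    chainI (upIdeal K (chU (d := d) G 0)) (fun j : Fin d => (X (Fin.natAdd m j))) i =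
      upIdeal K (chU G i) := by
  apply le_antisymm
  · apply sup_le
    · apply Ideal.span_mono
      apply Set.image_mono
      intro u hu
      left
      exact (mem_chU_zero u).1 hu
    · rw [Ideal.span_le]
      rintro _ ⟨j, hj, rfl⟩
      show X _ ∈ upIdeal K (chU G i)
      rw [X, monomial_mem_upIdeal (chU_upper hG i)]
      right
      exact ⟨j, hj, by simp⟩
  · unfold upIdeal
    rw [Ideal.span_le]
    rintro _ ⟨u, hu, rfl⟩
    rcases hu with h | ⟨j, hj, h⟩
    · apply Ideal.mem_sup_left
      exact Ideal.subset_span ⟨u, (mem_chU_zero u).2 h, rfl⟩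
    · apply Ideal.mem_sup_right
      have hle : Finsupp.single (Fin.natAdd m j) 1 ≤ u := by
        rw [Finsupp.single_le_iff]; omega
      obtain ⟨w, rfl⟩ := exists_add_of_le hle
      have : (monomial (Finsupp.single (Fin.natAdd m j) 1 + w) (1 : K)) =
          X (Fin.natAdd m j) * monomial w 1 := by
        rw [X, monomial_mul, one_mul]
      show monomial _ _ ∈ _
      rw [this]
      exact Ideal.mul_mem_right _ _ (Ideal.subset_span ⟨j, hj, rfl⟩)

lemma rho_add_single (u : Fin (m + d) →₀ ℕ) (j : Fin d) (a : ℕ) :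
    rho (u + Finsupp.single (Fin.natAdd m j) a) = rho u := by
  funext l
  have : Fin.natAdd m j ≠ Fin.castAdd d l := by
    intro h; have := congrArg Fin.val h; simp at this; omega
  simp [rho, this]

lemma chain_reg (hG : IsLowerSet (G : Set (Fin m → ℕ))) (i : Fin d)
    (f : MvPolynomial (Fin (m + d)) K)
    (hf : X (Fin.natAdd m i) * f ∈ chainI (upIdeal K (chU (d := d) G 0))
      (fun j : Fin d => (X (Fin.natAdd m j))) i) :
    f ∈ chainI (upIdeal K (chU (d := d) G 0))
      (fun j : Fin d => (X (Fin.natAdd m j))) i := by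
  rw [chain_eq hG, mem_upIdeal (chU_upper hG i)] at hf ⊢
  intro u hu
  have h1 : u + Finsupp.single (Fin.natAdd m i) 1 ∈ (X (Fin.natAdd m i) * f).support := by
    rw [mem_support_iff, add_comm u, coeff_X_mul]
    exact mem_support_iff.1 hu
  rcases hf _ h1 with h | ⟨j, hj, h⟩
  · left; rwa [rho_add_single] at h
  · right
    refine ⟨j, hj, ?_⟩
    have : Fin.natAdd m i ≠ Fin.natAdd m j := by
      intro h; have := congrArg Fin.val h; simp at this; omega
    simpa [Finsupp.single_apply, this] using h

open Classical in
lemma hilb_top (hG : IsLowerSet (G : Set (Fin m → ℕ))) (k : ℕ) :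
    hilb (homogeneousSubmodule (Fin (m + d)) K) (upIdeal K (chU (d := d) G d)) k =
      (G.filter (fun u => ∑ l, u l = k)).card := by
  rw [hilb_upIdeal (chU_upper hG d), ← Fintype.card_coe, ← Nat.card_eq_fintype_card]
  have hz : ∀ u : Fin (m + d) →₀ ℕ, u ∉ chU G d ↔ rho u ∈ G ∧ ∀ j, u (Fin.natAdd m j) = 0 := by
    intro u
    simp [chU]
  have hdeg : ∀ u : Fin (m + d) →₀ ℕ, u.degree = ∑ l, rho u l + ∑ j, u (Fin.natAdd m j) := by
    intro u
    rw [Finsupp.degree_eq_sum, Fin.sum_univ_add]; rfl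
  let back : (Fin m → ℕ) → (Fin (m + d) →₀ ℕ) := fun w =>
    Finsupp.equivFunOnFinite.symm (Fin.append w (fun _ => 0))
  have hb1 : ∀ w, rho (back w) = w := by
    intro w; funext l; simp [rho, back]
  have hb2 : ∀ w j, back w (Fin.natAdd m j) = 0 := by
    intro w j; simp [back]
  refine Nat.card_congr
    { toFun := fun u => ⟨rho u.1, ?_⟩
      invFun := fun w => ⟨back w.1, ?_⟩
      left_inv := ?_
      right_inv := ?_ }
  · have h := (hz u.1).1 u.2.2
    rw [Finset.mem_filter]
    refine ⟨h.1, ?_⟩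
    have h2 := u.2.1
    rw [hdeg] at h2
    simpa [h.2] using h2
  · have h := Finset.mem_filter.1 w.2
    refine ⟨?_, ?_⟩
    · rw [hdeg, hb1, h.2]; simp [hb2]
    · rw [hz, hb1]; exact ⟨h.1, hb2 _⟩
  · intro u
    have h := (hz u.1).1 u.2.2
    apply Subtype.ext
    ext l
    refine Fin.addCases (fun l => ?_) (fun j => ?_) l
    · exact congrFun (hb1 _) l
    · show back _ _ = _
      rw [hb2, h.2]
  · intro w
    exact Subtype.ext (hb1 _)

lemma stable_chU (hG : IsLowerSet (G : Set (Fin m → ℕ)))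
    (hst : ∀ u ∈ G, ∀ i j : Fin m, i < j → u i ≠ 0 → linePt i j u (u i - 1) ∈ G) :
    IsStableMonomialIdeal (upIdeal K (chU (d := d) G 0)) := by
  refine ⟨⟨chU G 0, rfl⟩, ?_⟩
  intro u hu jmax hj _ i hi
  rw [monomial_mem_upIdeal (chU_upper hG 0), mem_chU_zero] at hu ⊢
  intro hcon
  apply hu
  set u' := u + Finsupp.single i 1 - Finsupp.single jmax 1 with hu'
  have hval : ∀ l, u' l = u l + (if i = l then 1 else 0) - (if jmax = l then 1 else 0) := by
    intro l; simp [hu', Finsupp.single_apply]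
  induction jmax using Fin.addCases with
  | right j =>
    refine hG ?_ hcon
    intro l
    have : Fin.natAdd m j ≠ Fin.castAdd d l := by
      intro h; have := congrArg Fin.val h; simp at this; omega
    show u _ ≤ u' _
    rw [hval, if_neg this]; omega
  | left j =>
    obtain ⟨i', rfl⟩ : ∃ i' : Fin m, i = Fin.castAdd d i' :=
      ⟨⟨i, by have : (i : ℕ) < j := hi; omega⟩, rfl⟩
    have hij : i' < j := hi
    have hne : i' ≠ j := hij.ne
    have hinj : ∀ a b : Fin m, Fin.castAdd d a = Fin.castAdd d b ↔ a = b := fun a b =>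
      (Fin.castAdd_injective m d).eq_iff
    have hr : ∀ l, rho u' l = rho u l + (if i' = l then 1 else 0) - (if j = l then 1 else 0) := by
      intro l
      show u' _ = _
      rw [hval]; simp only [hinj]; rfl
    have hji : rho u j ≠ 0 := hj
    have e1 : rho u' i' = rho u i' + 1 := by rw [hr]; simp [hne.symm]
    have e2 : rho u' j = rho u j - 1 := by rw [hr]; simp [hne]
    have := hst (rho u') hcon i' j hij (by omega)
    convert this using 1
    funext l
    unfold linePt
    split_ifs with h1 h2
    · subst h1; omega
    · subst h2; omega
    · rw [hr, if_neg (fun h => h1 h.symm), if_neg (fun h => h2 h.symm)]; rfl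

end
end KM

namespace KM
section
variable {K : Type*} [Field K] {m d : ℕ} {G : Finset (Fin m → ℕ)}

lemma mono_split (u : Fin (m + d) →₀ ℕ) : (monomial u (1 : K)) =
    (∏ l : Fin m, X (Fin.castAdd d l) ^ rho u l) *
      ∏ j : Fin d, X (Fin.natAdd m j) ^ u (Fin.natAdd m j) := by
  rw [monomial_eq, C_1, one_mul, Finsupp.prod_fintype _ _ (fun _ => pow_zero _),
    Fin.prod_univ_add]
  rfl

lemma xmon_mem (w : Fin m → ℕ) (hw : w ∉ G) :
    (∏ l : Fin m, X (Fin.castAdd d l) ^ w l) ∈ upIdeal K (chU (d := d) G 0) := by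
  have h1 : rho (Finsupp.equivFunOnFinite.symm (Fin.append w (fun _ : Fin d => 0))) = w := by
    funext l; simp [rho]
  have h2 := mono_split (K := K) (Finsupp.equivFunOnFinite.symm (Fin.append w (fun _ : Fin d => 0)))
  rw [h1] at h2
  have h3 : ∏ j : Fin d, (X (Fin.natAdd m j) : MvPolynomial (Fin (m + d)) K) ^
      (Finsupp.equivFunOnFinite.symm (Fin.append w (fun _ : Fin d => 0))) (Fin.natAdd m j) = 1 :=
    Finset.prod_eq_one fun j _ => by simp
  rw [h3, mul_one] at h2
  rw [← h2]
  refine Ideal.subset_span ⟨_, ?_, rfl⟩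
  rw [mem_chU_zero, h1]; exact hw

lemma le_comap_of {R : Type*} [CommRing R] [Algebra K R] (ψ : MvPolynomial (Fin (m + d)) K →ₐ[K] R)
    (I : Ideal R) (h : ∀ w ∉ G, ∏ l : Fin m, ψ (X (Fin.castAdd d l)) ^ w l ∈ I) :
    ∀ f ∈ upIdeal K (chU (d := d) G 0), ψ f ∈ I := by
  have : upIdeal K (chU (d := d) G 0) ≤ I.comap ψ := by
    unfold upIdeal
    rw [Ideal.span_le]
    rintro _ ⟨u, hu, rfl⟩
    show ψ (monomial u 1) ∈ I
    rw [mono_split, map_mul, map_prod]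
    simp only [map_pow]
    exact Ideal.mul_mem_right _ _ (h _ ((mem_chU_zero u).1 hu))
  exact this

lemma killed {R : Type*} [CommRing R] [Algebra K R] (h0 : (0 : Fin m → ℕ) ∈ G)
    (ψ : MvPolynomial (Fin (m + d)) K →ₐ[K] R) (hψ : ∀ l, ψ (X (Fin.castAdd d l)) = 0) :
    ∀ f ∈ upIdeal K (chU (d := d) G 0), ψ f = 0 := by
  refine le_comap_of ψ ⊥ ?_
  intro w hw
  have hne : ∃ l, w l ≠ 0 := by
    by_contra hcon
    push Not at hcon
    exact hw (by rwa [show w = 0 from funext hcon])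
  obtain ⟨l, hl⟩ := hne
  rw [Ideal.mem_bot]
  apply Finset.prod_eq_zero (Finset.mem_univ l)
  rw [hψ, zero_pow hl]

lemma pow_mem (l : Fin m) : ∃ N : ℕ, (X (Fin.castAdd d l) : MvPolynomial (Fin (m + d)) K) ^ N ∈
    upIdeal K (chU (d := d) G 0) := by
  classical
  have : ∃ N : ℕ, Pi.single l N ∉ G := by
    by_contra hcon
    push Not at hcon
    exact Set.infinite_of_injective_forall_mem (s := (G : Set (Fin m → ℕ)))
      (Pi.single_injective (M := fun _ : Fin m => ℕ) l) hcon G.finite_toSet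
  obtain ⟨N, hN⟩ := this
  refine ⟨N, ?_⟩
  have h := xmon_mem (K := K) (d := d) _ hN
  rw [Finset.prod_eq_single l] at h
  · simpa using h
  · intro b _ hb
    rw [Pi.single_eq_of_ne hb, pow_zero]
  · simp

lemma krull_eq (h0 : (0 : Fin m → ℕ) ∈ G) :
    ringKrullDim (MvPolynomial (Fin (m + d)) K ⧸ upIdeal K (chU (d := d) G 0)) = d := by
  let π : MvPolynomial (Fin (m + d)) K →ₐ[K] MvPolynomial (Fin d) K :=
    aeval (Fin.append (fun _ => 0) X)
  let ι : MvPolynomial (Fin d) K →ₐ[K] MvPolynomial (Fin (m + d)) K :=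
    aeval (fun j => X (Fin.natAdd m j))
  have hπx : ∀ l, π (X (Fin.castAdd d l)) = 0 := by intro l; simp [π]
  have hπy : ∀ j, π (X (Fin.natAdd m j)) = X j := by intro l; simp [π]
  have hι : ∀ f, π (ι f) = f := by
    have : π.comp ι = AlgHom.id K _ := by
      apply algHom_ext; intro j; simp [ι, hπy]
    exact fun f => DFunLike.congr_fun this f
  have hsurj : Function.Surjective π.toRingHom := fun f => ⟨ι f, hι f⟩
  have hz : PrimeSpectrum.zeroLocus (upIdeal K (chU (d := d) G 0) : Set _) =
      PrimeSpectrum.zeroLocus ((RingHom.ker π.toRingHom : Ideal _) : Set (MvPolynomial (Fin (m + d)) K)) := by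
    ext Q
    rw [PrimeSpectrum.mem_zeroLocus, PrimeSpectrum.mem_zeroLocus]
    constructor
    · intro hQ f hf
      have hx : ∀ l, X (Fin.castAdd d l) ∈ Q.asIdeal := by
        intro l
        obtain ⟨N, hN⟩ := pow_mem (K := K) (d := d) (G := G) l
        exact Q.isPrime.mem_of_pow_mem _ (hQ hN)
      have hcomp : ((Ideal.Quotient.mkₐ K Q.asIdeal).comp ι).comp π =
          Ideal.Quotient.mkₐ K Q.asIdeal := by
        apply algHom_ext
        intro i
        refine Fin.addCases (fun l => ?_) (fun j => ?_) i
        · simp only [AlgHom.comp_apply, hπx, map_zero]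
          exact (Ideal.Quotient.eq_zero_iff_mem.2 (hx l)).symm
        · simp [hπy, ι]
      have h1 := DFunLike.congr_fun hcomp f
      have h2 : π f = 0 := hf
      rw [AlgHom.comp_apply, h2, map_zero] at h1
      exact Ideal.Quotient.eq_zero_iff_mem.1 h1.symm
    · intro hQ f hf
      exact hQ (killed h0 π hπx f hf)
  rw [ringKrullDim_quotient, hz, ← ringKrullDim_quotient,
    ringKrullDim_eq_of_ringEquiv (RingHom.quotientKerEquivOfSurjective hsurj),
    MvPolynomial.ringKrullDim_of_isNoetherianRing, ringKrullDim_eq_zero_of_field]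
  simp

lemma det_ne (h0 : (0 : Fin m → ℕ) ∈ G) (c : Fin d → Fin (m + d) → K)
    (hfin : Module.Finite K ((MvPolynomial (Fin (m + d)) K ⧸ upIdeal K (chU (d := d) G 0)) ⧸
      Ideal.span (Set.range (fun j => Ideal.Quotient.mk (upIdeal K (chU (d := d) G 0))
        (∑ i, c j i • X i))))) :
    (Matrix.of fun j k => c j (Fin.natAdd m k)).det ≠ 0 := by
  intro hdet
  obtain ⟨w, hw0, hw⟩ := Matrix.exists_mulVec_eq_zero_iff.2 hdet
  let φ : MvPolynomial (Fin (m + d)) K →ₐ[K] Polynomial K :=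
    aeval (Fin.append (fun _ => 0) (fun k => w k • Polynomial.X))
  have hx : ∀ l, φ (X (Fin.castAdd d l)) = 0 := by intro l; simp [φ]
  have hy : ∀ j, φ (X (Fin.natAdd m j)) = w j • Polynomial.X := by intro l; simp [φ]
  have hl : ∀ j, φ (∑ i, c j i • X i) = 0 := by
    intro j
    rw [map_sum]
    simp only [map_smul]
    rw [Fin.sum_univ_add]
    simp only [hx, hy, smul_zero, Finset.sum_const_zero, zero_add, smul_smul]
    rw [← Finset.sum_smul]
    have := congrFun hw j
    have h2 : ∑ k, c j (Fin.natAdd m k) * w k = 0 := this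
    rw [h2, zero_smul]
  let φ1 := Ideal.Quotient.liftₐ (upIdeal K (chU (d := d) G 0)) φ (killed h0 φ hx)
  have h1 : ∀ f, φ1 (Ideal.Quotient.mk _ f) = φ f := fun f => rfl
  let φ2 := Ideal.Quotient.liftₐ (Ideal.span (Set.range (fun j =>
      Ideal.Quotient.mk (upIdeal K (chU (d := d) G 0)) (∑ i, c j i • X i)))) φ1 (by
    have : Ideal.span (Set.range (fun j =>
      Ideal.Quotient.mk (upIdeal K (chU (d := d) G 0)) (∑ i, c j i • X i))) ≤ RingHom.ker φ1 := by
      rw [Ideal.span_le]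
      rintro _ ⟨j, rfl⟩
      show φ1 _ = 0
      rw [h1, hl]
    exact this)
  have hsurj : Function.Surjective φ := by
    rw [← AlgHom.range_eq_top, eq_top_iff, ← Polynomial.adjoin_X, Algebra.adjoin_le_iff,
      Set.singleton_subset_iff]
    obtain ⟨k, hk⟩ := Function.ne_iff.1 hw0
    refine ⟨(w k)⁻¹ • X (Fin.natAdd m k), ?_⟩
    show φ _ = _
    rw [map_smul, hy, smul_smul, inv_mul_cancel₀ hk, one_smul]
  have hsurj2 : Function.Surjective φ2.toLinearMap := by
    intro p
    obtain ⟨f, rfl⟩ := hsurj p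
    exact ⟨Ideal.Quotient.mk _ (Ideal.Quotient.mk _ f), rfl⟩
  exact Polynomial.not_finite (R := K) (Module.Finite.of_surjective φ2.toLinearMap hsurj2)

lemma y_regular (hG : IsLowerSet (G : Set (Fin m → ℕ))) (h0 : (0 : Fin m → ℕ) ∈ G) :
    RingTheory.Sequence.IsRegular (MvPolynomial (Fin (m + d)) K ⧸ upIdeal K (chU (d := d) G 0))
      (List.ofFn (fun j : Fin d => Ideal.Quotient.mk (upIdeal K (chU (d := d) G 0))
        (X (Fin.natAdd m j)))) := by
  rw [RingTheory.Sequence.isRegular_iff]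
  refine ⟨(isWeaklyRegular_quot_iff _ _).2 (chain_reg hG), ?_⟩
  intro htop
  rw [smul_eq_mul, Ideal.mul_top] at htop
  have h1 : (Ideal.Quotient.mk (upIdeal K (chU (d := d) G 0)) 1) ∈ Ideal.map
      (Ideal.Quotient.mk (upIdeal K (chU (d := d) G 0)))
      (Ideal.span (Set.range (fun j : Fin d => (X (Fin.natAdd m j) :
        MvPolynomial (Fin (m + d)) K)))) := by
    rw [Ideal.map_span, ← Set.range_comp]
    have : Ideal.ofList (List.ofFn (fun j : Fin d =>
        Ideal.Quotient.mk (upIdeal K (chU (d := d) G 0)) (X (Fin.natAdd m j)))) ≤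
        Ideal.span (Set.range ((Ideal.Quotient.mk (upIdeal K (chU (d := d) G 0))) ∘
          (fun j : Fin d => (X (Fin.natAdd m j) : MvPolynomial (Fin (m + d)) K)))) := by
      apply Ideal.span_mono
      intro x hx
      exact List.mem_ofFn.1 hx
    apply this
    rw [← htop]; trivial
  rw [Ideal.mem_quotient_iff_mem_sup, sup_comm, ← chainI_top, chain_eq hG] at h1
  have h2 := (monomial_mem_upIdeal (K := K) (chU_upper (d := d) hG d) 0).1 h1
  rcases h2 with h | ⟨j, _, h⟩
  · exact h h0
  · exact h rfl

open Matrix in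
lemma exists_auto (c : Fin d → Fin (m + d) → K)
    (hdet : (Matrix.of fun j k => c j (Fin.natAdd m k)).det ≠ 0) :
    ∃ ψ : MvPolynomial (Fin (m + d)) K ≃ₐ[K] MvPolynomial (Fin (m + d)) K,
      (∀ l, ψ (X (Fin.castAdd d l)) = X (Fin.castAdd d l)) ∧
      (∀ l, ψ.symm (X (Fin.castAdd d l)) = X (Fin.castAdd d l)) ∧
      ∀ j, ψ (X (Fin.natAdd m j)) = ∑ i, c j i • X i := by
  set a : Matrix (Fin d) (Fin d) K := Matrix.of fun j k => c j (Fin.natAdd m k) with ha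
  let a1 : Matrix (Fin d) (Fin d) (MvPolynomial (Fin (m + d)) K) := a.map C
  let a2 : Matrix (Fin d) (Fin d) (MvPolynomial (Fin (m + d)) K) := a⁻¹.map C
  have h12 : a1 * a2 = 1 := by
    show a.map (C : K →+* (MvPolynomial (Fin (m + d)) K)) * a⁻¹.map (C : K →+* (MvPolynomial (Fin (m + d)) K)) = 1
    rw [← Matrix.map_mul, Matrix.mul_nonsing_inv _ (isUnit_iff_ne_zero.2 hdet)]
    exact Matrix.map_one _ (map_zero _) (map_one _)
  have h21 : a2 * a1 = 1 := by
    show a⁻¹.map (C : K →+* (MvPolynomial (Fin (m + d)) K)) * a.map (C : K →+* (MvPolynomial (Fin (m + d)) K)) = 1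
    rw [← Matrix.map_mul, Matrix.nonsing_inv_mul _ (isUnit_iff_ne_zero.2 hdet)]
    exact Matrix.map_one _ (map_zero _) (map_one _)
  let y : Fin d → (MvPolynomial (Fin (m + d)) K) := fun j => X (Fin.natAdd m j)
  let z : Fin d → (MvPolynomial (Fin (m + d)) K) := fun j => ∑ l, c j (Fin.castAdd d l) • X (Fin.castAdd d l)
  let x : Fin m → (MvPolynomial (Fin (m + d)) K) := fun l => X (Fin.castAdd d l)
  let ψ : (MvPolynomial (Fin (m + d)) K) →ₐ[K] (MvPolynomial (Fin (m + d)) K) := aeval (Fin.append x (a1 *ᵥ y + z))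
  let ψ' : (MvPolynomial (Fin (m + d)) K) →ₐ[K] (MvPolynomial (Fin (m + d)) K) := aeval (Fin.append x (a2 *ᵥ (y - z)))
  have hx : ∀ l, ψ (X (Fin.castAdd d l)) = X (Fin.castAdd d l) := by intro l; simp [ψ, x]
  have hx' : ∀ l, ψ' (X (Fin.castAdd d l)) = X (Fin.castAdd d l) := by intro l; simp [ψ', x]
  have hy : ψ ∘ y = a1 *ᵥ y + z := by funext j; simp [ψ, y]
  have hy' : ψ' ∘ y = a2 *ᵥ (y - z) := by funext j; simp [ψ', y]
  have hz : ψ ∘ z = z := by funext j; simp [z, hx]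
  have hz' : ψ' ∘ z = z := by funext j; simp [z, hx']
  have hmul : ∀ (χ : (MvPolynomial (Fin (m + d)) K) →ₐ[K] (MvPolynomial (Fin (m + d)) K)) (b : Matrix (Fin d) (Fin d) K) (v : Fin d → (MvPolynomial (Fin (m + d)) K)),
      χ ∘ ((b.map C : Matrix (Fin d) (Fin d) (MvPolynomial (Fin (m + d)) K)) *ᵥ v) = (b.map C) *ᵥ (χ ∘ v) := by
    intro χ b v
    funext j
    show χ.toRingHom _ = _
    rw [RingHom.map_mulVec]
    have hb : ((b.map C : Matrix (Fin d) (Fin d) (MvPolynomial (Fin (m + d)) K)).map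
        χ.toRingHom) = b.map C := by
      funext i k
      exact χ.commutes _
    rw [hb]
    rfl
  have hc1 : ψ.comp ψ' = AlgHom.id K (MvPolynomial (Fin (m + d)) K) := by
    apply algHom_ext
    intro i
    refine Fin.addCases (fun l => ?_) (fun j => ?_) i
    · rw [AlgHom.comp_apply, hx', hx]; rfl
    · have : ψ ∘ ψ' ∘ y = y := by
        rw [hy', hmul, show ψ ∘ (y - z) = ψ ∘ y - ψ ∘ z from by funext j; simp, hy, hz,
          add_sub_cancel_right]
        show a2 *ᵥ (a1 *ᵥ y) = y
        rw [Matrix.mulVec_mulVec, h21, Matrix.one_mulVec]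
      exact congrFun this j
  have hc2 : ψ'.comp ψ = AlgHom.id K (MvPolynomial (Fin (m + d)) K) := by
    apply algHom_ext
    intro i
    refine Fin.addCases (fun l => ?_) (fun j => ?_) i
    · rw [AlgHom.comp_apply, hx, hx']; rfl
    · have : ψ' ∘ ψ ∘ y = y := by
        rw [hy, show ψ' ∘ (a1 *ᵥ y + z) = ψ' ∘ (a1 *ᵥ y) + ψ' ∘ z from by funext j; simp,
          hmul, hy', hz']
        show a1 *ᵥ (a2 *ᵥ (y - z)) + z = y
        rw [Matrix.mulVec_mulVec, h12, Matrix.one_mulVec, sub_add_cancel]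
      exact congrFun this j
  refine ⟨AlgEquiv.ofAlgHom ψ ψ' hc1 hc2, hx, hx', ?_⟩
  intro j
  rw [Fin.sum_univ_add]
  have h := congrFun hy j
  refine h.trans ?_
  rw [Pi.add_apply, add_comm (∑ i, c j (Fin.castAdd d i) • X (Fin.castAdd d i))]
  congr 1
  show ∑ k, a1 j k * y k = _
  refine Finset.sum_congr rfl fun k _ => ?_
  rw [smul_eq_C_mul]
  rfl

lemma cm_upIdeal (hG : IsLowerSet (G : Set (Fin m → ℕ))) (h0 : (0 : Fin m → ℕ) ∈ G)
    (e : ℕ) (he : ringKrullDim (MvPolynomial (Fin (m + d)) K ⧸ upIdeal K (chU (d := d) G 0)) = e)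
    (θ : Fin e → MvPolynomial (Fin (m + d)) K ⧸ upIdeal K (chU (d := d) G 0))
    (hθ : ∀ j, θ j ∈ Submodule.map (Ideal.Quotient.mkₐ K (upIdeal K (chU (d := d) G 0))).toLinearMap
            (homogeneousSubmodule (Fin (m + d)) K 1))
    (hfin : Module.Finite K ((MvPolynomial (Fin (m + d)) K ⧸ upIdeal K (chU (d := d) G 0)) ⧸
      Ideal.span (Set.range θ))) :
    RingTheory.Sequence.IsRegular (MvPolynomial (Fin (m + d)) K ⧸ upIdeal K (chU (d := d) G 0))
      (List.ofFn θ) := by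
  rw [krull_eq h0] at he
  obtain rfl : d = e := by exact_mod_cast he
  have hex : ∀ j, ∃ c : Fin (m + d) → K,
      θ j = Ideal.Quotient.mk (upIdeal K (chU (d := d) G 0)) (∑ i, c i • X i) := by
    intro j
    obtain ⟨f, hf, hfj⟩ := hθ j
    rw [homogeneousSubmodule_one_eq_span_X] at hf
    obtain ⟨c, rfl⟩ := (Submodule.mem_span_range_iff_exists_fun K).1 hf
    exact ⟨c, hfj.symm⟩
  choose c hc using hex
  obtain rfl : θ = fun j => Ideal.Quotient.mk (upIdeal K (chU (d := d) G 0)) (∑ i, c j i • X i) :=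
    funext hc
  obtain ⟨ψ, h1, h2, h3⟩ := exists_auto c (det_ne h0 c hfin)
  set J := upIdeal K (chU (d := d) G 0) with hJ
  have hJJ : J = J.map (ψ.toRingEquiv : MvPolynomial (Fin (m + d)) K →+* MvPolynomial (Fin (m + d)) K) := by
    apply le_antisymm
    · intro f hf
      have : ψ.symm f ∈ J := by
        refine le_comap_of ψ.symm.toAlgHom J ?_ f hf
        intro w hw
        have : ∀ l, ψ.symm.toAlgHom (X (Fin.castAdd d l)) = X (Fin.castAdd d l) := h2
        simp only [this]
        exact xmon_mem w hw
      have h := Ideal.mem_map_of_mem (ψ.toRingEquiv : MvPolynomial (Fin (m + d)) K →+* MvPolynomial (Fin (m + d)) K) this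
      have h' : (ψ.toRingEquiv : MvPolynomial (Fin (m + d)) K →+* MvPolynomial (Fin (m + d)) K) (ψ.symm f) = f := ψ.apply_symm_apply f
      rwa [h'] at h
    · rw [Ideal.map_le_iff_le_comap]
      intro f hf
      refine le_comap_of ψ.toAlgHom J ?_ f hf
      intro w hw
      have : ∀ l, ψ.toAlgHom (X (Fin.castAdd d l)) = X (Fin.castAdd d l) := h1
      simp only [this]
      exact xmon_mem w hw
  let E := Ideal.quotientEquiv J J ψ.toRingEquiv hJJ
  have hE : ∀ f, E (Ideal.Quotient.mk J f) = Ideal.Quotient.mk J (ψ f) := fun f => rfl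
  refine (AddEquiv.isRegular_congr (e := E.toAddEquiv) ?_).1 (y_regular hG h0)
  rw [List.forall₂_iff_get]
  refine ⟨by simp, ?_⟩
  intro i hi1 hi2 x
  simp only [List.get_eq_getElem, List.getElem_ofFn, smul_eq_mul]
  show E _ = _ * E x
  rw [map_mul, hE, h3]
end
end KM

namespace KM

open Pointwise in
lemma range_pow {B : Type*} [CommRing B] {m : ℕ} (b : Fin m → B) (k : ℕ) :
    (Set.range b) ^ k = (fun u : Fin m → ℕ => ∏ l, b l ^ u l) '' {u | ∑ l, u l = k} := by
  classical
  have hprod : ∀ (j : Fin m), ∏ l, b l ^ (Pi.single j 1 : Fin m → ℕ) l = b j := by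
    intro j
    rw [Finset.prod_eq_single j]
    · simp
    · intro l _ hl
      rw [Pi.single_eq_of_ne hl, pow_zero]
    · simp
  have hadd : ∀ (u : Fin m → ℕ) (j : Fin m), ∏ l, b l ^ (u + Pi.single j 1 : Fin m → ℕ) l =
      b j * ∏ l, b l ^ u l := by
    intro u j
    simp only [Pi.add_apply, pow_add]
    rw [Finset.prod_mul_distrib, hprod, mul_comm]
  have hsum : ∀ (u : Fin m → ℕ) (j : Fin m), ∑ l, (u + Pi.single j 1 : Fin m → ℕ) l =
      ∑ l, u l + 1 := by
    intro u j
    simp only [Pi.add_apply]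
    rw [Finset.sum_add_distrib, Finset.sum_pi_single']
    simp
  induction k with
  | zero =>
    rw [pow_zero]
    ext x
    constructor
    · rintro rfl
      exact ⟨0, by simp, by simp⟩
    · rintro ⟨u, hu, rfl⟩
      have : ∀ l, u l = 0 := by
        intro l
        exact (Finset.sum_eq_zero_iff.1 hu) l (Finset.mem_univ l)
      simp [this]
  | succ k ih =>
    rw [pow_succ', ih]
    ext x
    rw [Set.mem_mul]
    constructor
    · rintro ⟨_, ⟨j, rfl⟩, _, ⟨u, hu, rfl⟩, rfl⟩
      refine ⟨u + Pi.single j 1, ?_, hadd u j⟩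
      show _ = _
      rw [hsum]; congr 1
    · rintro ⟨u, hu, rfl⟩
      have hu' : ∑ l, u l = k + 1 := hu
      obtain ⟨j, -, hj⟩ : ∃ j ∈ Finset.univ, u j ≠ 0 :=
        Finset.exists_ne_zero_of_sum_ne_zero (by rw [hu']; omega)
      have he : u = (u - Pi.single j 1) + Pi.single j 1 := by
        funext l
        simp only [Pi.add_apply, Pi.sub_apply]
        by_cases h : l = j
        · subst h; simp; omega
        · simp [h]
      refine ⟨b j, ⟨j, rfl⟩, _, ⟨u - Pi.single j 1, ?_, rfl⟩, ?_⟩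
      · have := hsum (u - Pi.single j 1) j
        rw [← he, hu'] at this
        show _ = _
        omega
      · rw [← hadd, ← he]

lemma exists_span_range {K B : Type*} [Field K] [AddCommGroup B] [Module K B]
    (D : Submodule K B) [Module.Finite K D] (m : ℕ) (hm : Module.finrank K D ≤ m) :
    ∃ b : Fin m → B, Submodule.span K (Set.range b) = D := by
  let β := Module.finBasis K D
  refine ⟨fun l => if h : (l : ℕ) < Module.finrank K D then (β ⟨l, h⟩ : B) else 0, ?_⟩
  apply le_antisymm
  · rw [Submodule.span_le]
    rintro _ ⟨l, rfl⟩
    show dite _ _ _ ∈ D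
    split_ifs
    · exact SetLike.coe_mem _
    · exact D.zero_mem
  · intro x hx
    have h1 : (⟨x, hx⟩ : D) ∈ Submodule.span K (Set.range β) := by
      rw [β.span_eq]; trivial
    have h2 := Submodule.mem_map_of_mem (f := D.subtype) h1
    rw [Submodule.map_span] at h2
    refine Submodule.span_mono ?_ h2
    rintro _ ⟨_, ⟨i, rfl⟩, rfl⟩
    refine ⟨⟨i, i.2.trans_le hm⟩, ?_⟩
    simp

lemma exists_vanish {K A : Type*} [Field K] [CommRing A] [Algebra K A]
    (𝒜 : ℕ → Submodule K A) [GradedAlgebra 𝒜] (I : Ideal A) (hI : I.IsHomogeneous 𝒜)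
    (hfin : Module.Finite K (A ⧸ I)) :
    ∃ N, ∀ k, N ≤ k → Submodule.map (Ideal.Quotient.mkₐ K I).toLinearMap (𝒜 k) = ⊥ := by
  let W : ℕ → Submodule K A := fun k => ⨆ j : {j // k ≤ j}, 𝒜 j.1
  have hW : ∀ k l, k ≤ l → W l ≤ W k := by
    intro k l hkl
    exact iSup_le fun j => le_iSup (fun j : {j // k ≤ j} => 𝒜 j.1) ⟨j.1, hkl.trans j.2⟩
  let f : ℕ →o (Submodule K (A ⧸ I))ᵒᵈ :=
    ⟨fun k => OrderDual.toDual (Submodule.map (Ideal.Quotient.mkₐ K I).toLinearMap (W k)),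
      fun k l hkl => Submodule.map_mono (hW k l hkl)⟩
  obtain ⟨N, hN⟩ := IsArtinian.monotone_stabilizes f
  refine ⟨N, fun k hk => ?_⟩
  have hkk : Submodule.map (Ideal.Quotient.mkₐ K I).toLinearMap (W k) =
      Submodule.map (Ideal.Quotient.mkₐ K I).toLinearMap (W (k + 1)) :=
    (hN k hk).symm.trans (hN (k + 1) (by omega))
  rw [eq_bot_iff]
  rintro _ ⟨x, hx, rfl⟩
  have hxW : x ∈ W k := le_iSup (fun j : {j // k ≤ j} => 𝒜 j.1) ⟨k, le_rfl⟩ hx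
  have h1 := Submodule.mem_map_of_mem (f := (Ideal.Quotient.mkₐ K I).toLinearMap) hxW
  rw [hkk] at h1
  obtain ⟨y, hy, hxy⟩ := h1
  have hyk : (DirectSum.decompose 𝒜 y k : A) = 0 := by
    have : W (k + 1) ≤ LinearMap.ker ((DirectSum.component K ℕ (fun i => 𝒜 i) k).comp
        (DirectSum.decomposeLinearEquiv 𝒜).toLinearMap) := by
      refine iSup_le fun j z hz => ?_
      rw [LinearMap.mem_ker]
      apply Subtype.ext
      exact DirectSum.decompose_of_mem_ne 𝒜 hz (by have := j.2; omega)
    have h2 := this hy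
    rw [LinearMap.mem_ker] at h2
    exact congrArg Subtype.val h2
  have hmem : y - x ∈ I := by
    rw [← Ideal.Quotient.eq]; exact hxy
  have h3 := hI k hmem
  rw [DirectSum.decompose_sub, DirectSum.sub_apply, Submodule.coe_sub, hyk,
    DirectSum.decompose_of_mem_same 𝒜 hx, zero_sub, neg_mem_iff] at h3
  exact Ideal.Quotient.eq_zero_iff_mem.2 h3

lemma hilb_bot {K A : Type*} [Field K] [CommRing A] [Algebra K A]
    (𝒜 : ℕ → Submodule K A) (k : ℕ) : hilb 𝒜 ⊥ k = Module.finrank K (𝒜 k) := by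
  have : hilb 𝒜 ⊥ k = Module.finrank K (Submodule.map (LinearMap.id : A →ₗ[K] A) (𝒜 k)) := by
    apply finrank_map_eq_of_ker
    intro x _
    simp only [AlgHom.toLinearMap_apply, Ideal.Quotient.mkₐ_eq_mk, Ideal.Quotient.eq_zero_iff_mem]
    rfl
  rw [this, Submodule.map_id]

open Classical in
lemma exists_G {K A : Type*} [Field K] [CommRing A] [Algebra K A]
    (𝒜 : ℕ → Submodule K A) [GradedAlgebra 𝒜] (hstd : ∀ i, 𝒜 i = 𝒜 1 ^ i)
    (I : Ideal A) (hI : I.IsHomogeneous 𝒜) (hfin : Module.Finite K (A ⧸ I)) (hne : I ≠ ⊤)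
    (m : ℕ) (hm : hilb 𝒜 I 1 ≤ m) :
    ∃ G : Finset (Fin m → ℕ), IsLowerSet (G : Set (Fin m → ℕ)) ∧ 0 ∈ G ∧
      (∀ u ∈ G, ∀ i j : Fin m, i < j → u i ≠ 0 → linePt i j u (u i - 1) ∈ G) ∧
      ∀ k, (G.filter (fun u => ∑ l, u l = k)).card = hilb 𝒜 I k := by
  obtain ⟨N, hN⟩ := exists_vanish 𝒜 I hI hfin
  obtain ⟨b, hb⟩ := exists_span_range
    (Submodule.map (Ideal.Quotient.mkₐ K I).toLinearMap (𝒜 1)) m hm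
  have hD : ∀ k, Submodule.span K ((fun u : Fin m → ℕ => ∏ l, b l ^ u l) '' {u | ∑ l, u l = k}) =
      Submodule.map (Ideal.Quotient.mkₐ K I).toLinearMap (𝒜 k) := by
    intro k
    rw [hstd k, Submodule.map_pow, ← hb, Submodule.span_pow, range_pow]
  obtain ⟨F, hF, hFc⟩ := exists_standard (K := K) b N (by
    intro u hu
    have : ∏ l, b l ^ u l ∈ Submodule.span K
        ((fun v : Fin m → ℕ => ∏ l, b l ^ v l) '' {v | ∑ l, v l = ∑ l, u l}) :=
      Submodule.subset_span ⟨u, rfl, rfl⟩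
    rw [hD, hN _ hu] at this
    exact this)
  obtain ⟨G, hG, hGc, hst⟩ := exists_costable F hF
  have hcount : ∀ k, (G.filter (fun u => ∑ l, u l = k)).card = hilb 𝒜 I k := by
    intro k
    rw [hGc, hFc, hD]; rfl
  refine ⟨G, hG, ?_, hst, hcount⟩
  by_contra h0
  have hemp : G = ∅ := by
    rw [Finset.eq_empty_iff_forall_notMem]
    intro u hu
    exact h0 (hG (fun l => Nat.zero_le _) hu)
  have h1 := hcount 0
  rw [hemp, Finset.filter_empty, Finset.card_empty] at h1
  have h2 := Submodule.finrank_eq_zero.1 h1.symm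
  apply hne
  rw [Ideal.eq_top_iff_one, ← Ideal.Quotient.eq_zero_iff_mem]
  have h3 : (Ideal.Quotient.mk I 1) ∈
      Submodule.map (Ideal.Quotient.mkₐ K I).toLinearMap (𝒜 0) :=
    ⟨1, SetLike.GradedOne.one_mem, rfl⟩
  rw [h2] at h3
  exact h3

end KM


/-- **Lemma 3.3(i), Kubitzke–Murai.**
Let `S = K[x₁,…,x_n]`.  For any Cohen-Macaulay standard graded `K`-algebra `A` with
`dim_K A₁ ≤ n` (Cohen-Macaulayness being expressed by the statement that every linear system
of parameters is a regular sequence), there is a stable monomial ideal `J ⊆ S` such that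
`S/J` is Cohen-Macaulay and `S/J` has the same Hilbert series as `A` (the degree-`i`
component of `S/J` being the image of the homogeneous polynomials of degree `i` under the
quotient map). -/
theorem exists_stable_monomial_ideal_same_hilbert_series
    (K : Type*) [Field K] [CharZero K] (n : ℕ)
    (A : Type*) [CommRing A] [Algebra K A]
    (𝒜 : ℕ → Submodule K A) [GradedAlgebra 𝒜]
    (hstd : ∀ i, 𝒜 i = 𝒜 1 ^ i)
    (hfin : ∀ i, Module.Finite K (𝒜 i))
    (d : ℕ) (hdim : ringKrullDim A = d)
    (hCM : ∀ θ' : Fin d → A, (∀ j, θ' j ∈ 𝒜 1) →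
      Module.Finite K (A ⧸ Ideal.span (Set.range θ')) →
      RingTheory.Sequence.IsRegular A (List.ofFn θ'))
    (hA1 : Module.finrank K (𝒜 1) ≤ n) :
    ∃ J : Ideal (MvPolynomial (Fin n) K),
      IsStableMonomialIdeal J ∧
      (∀ e : ℕ, ringKrullDim (MvPolynomial (Fin n) K ⧸ J) = e →
        ∀ θ' : Fin e → MvPolynomial (Fin n) K ⧸ J,
          (∀ j, θ' j ∈ Submodule.map (Ideal.Quotient.mkₐ K J).toLinearMap
            (homogeneousSubmodule (Fin n) K 1)) →
          Module.Finite K ((MvPolynomial (Fin n) K ⧸ J) ⧸ Ideal.span (Set.range θ')) →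
          RingTheory.Sequence.IsRegular (MvPolynomial (Fin n) K ⧸ J) (List.ofFn θ')) ∧
      (∀ i : ℕ,
        Module.finrank K
          (Submodule.map (Ideal.Quotient.mkₐ K J).toLinearMap
            (homogeneousSubmodule (Fin n) K i)) =
        Module.finrank K (𝒜 i)) := by
  classical
  have hinf : Infinite K := Infinite.of_injective (Nat.cast : ℕ → K) Nat.cast_injective
  have hft : Algebra.FiniteType K A := KM.finiteType_std 𝒜 hstd (hfin 1)
  have hnt : Nontrivial A := by
    by_contra h
    rw [not_nontrivial_iff_subsingleton] at h
    rw [ringKrullDim_eq_bot_of_subsingleton] at hdim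
    exact absurd hdim.symm (WithBot.coe_ne_bot)
  obtain ⟨θ, hθ, hθfin⟩ := KM.exists_lsop (K := K) (𝒜 1)
    (fun P hP h => KM.prime_maximal 𝒜 hstd P hP h) d hdim
  have hregA := hCM θ hθ hθfin
  rw [RingTheory.Sequence.isRegular_iff] at hregA
  obtain ⟨hweak, hproper⟩ := hregA
  have hreg := (KM.isWeaklyRegular_iff θ).1 hweak
  have hbot : (⊥ : Ideal A).IsHomogeneous 𝒜 := Ideal.IsHomogeneous.bot 𝒜
  have hItop : KM.chainI ⊥ θ d = Ideal.span (Set.range θ) := by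
    rw [KM.chainI_top, bot_sup_eq]
  have hIhom := KM.chainI_homog 𝒜 ⊥ hbot θ hθ d
  have hne : KM.chainI ⊥ θ d ≠ ⊤ := by
    rw [hItop]
    intro h
    apply hproper
    rw [smul_eq_mul, Ideal.mul_top, ← h]
    unfold Ideal.ofList
    congr 1
    ext x
    exact List.mem_ofFn.symm
  have h0 : KM.hilb 𝒜 ⊥ 0 = 1 := by
    rw [KM.hilb_bot, hstd 0, pow_zero, Submodule.one_eq_span]
    exact finrank_span_singleton one_ne_zero
  have h1 := KM.hilb_one 𝒜 hfin ⊥ hbot θ hθ hreg h0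
  rw [KM.hilb_bot] at h1
  obtain ⟨m, rfl⟩ : ∃ m, n = m + d := ⟨n - d, by omega⟩
  obtain ⟨G, hG, hG0, hst, hcount⟩ := KM.exists_G 𝒜 hstd (KM.chainI ⊥ θ d) hIhom
    (by rw [hItop]; exact hθfin) hne m (by omega)
  refine ⟨KM.upIdeal K (KM.chU G 0), KM.stable_chU hG hst, KM.cm_upIdeal hG hG0, ?_⟩
  intro i
  rw [← KM.hilb_bot 𝒜 i]
  refine (KM.hilb_determined 𝒜 hfin (homogeneousSubmodule (Fin (m + d)) K)
    (fun k => KM.finite_homog k) ⊥ hbot (KM.upIdeal K (KM.chU G 0)) KM.upIdeal_homog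
    θ hθ (fun j : Fin d => X (Fin.natAdd m j)) (fun j => isHomogeneous_X K _)
    hreg (KM.chain_reg hG) ?_ i).symm
  intro k
  rw [← hcount, KM.chain_eq hG, KM.hilb_top hG]
end

section
/- Let S = K[x_1,…,x_n] and let I ⊂ S be a stable monomial ideal such that S/I is a Cohen-Macaulay graded K-algebra of Krull dimension d. Then x_n, x_{n−1},…,x_{n−d+1} is a linear system of parameters for S/I, and I is generated by monomials of degree ≤ deg h_{S/I}(t) + 1. -/
open MvPolynomial

set_option synthInstance.maxHeartbeats 1000000
set_option maxHeartbeats 1000000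

/-- membership in a monomial ideal -/
lemma aux_mem_iff {K : Type*} [Field K] {n : ℕ} {I : Ideal (MvPolynomial (Fin n) K)}
    {M : Set (Fin n →₀ ℕ)}
    (hM : I = Ideal.span ((fun m => (monomial m (1 : K) : MvPolynomial (Fin n) K)) '' M))
    (m : Fin n →₀ ℕ) : (monomial m (1 : K)) ∈ I ↔ ∃ s ∈ M, s ≤ m := by
  classical
  rw [hM, mem_ideal_span_monomial_image]
  simp [support_monomial]

lemma aux_mem_iff' {K : Type*} [Field K] {n : ℕ} {I : Ideal (MvPolynomial (Fin n) K)}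
    {M : Set (Fin n →₀ ℕ)}
    (hM : I = Ideal.span ((fun m => (monomial m (1 : K) : MvPolynomial (Fin n) K)) '' M))
    (f : MvPolynomial (Fin n) K) : f ∈ I ↔ ∀ m ∈ f.support, (monomial m (1 : K)) ∈ I := by
  simp_rw [aux_mem_iff hM]
  rw [hM, mem_ideal_span_monomial_image]

lemma aux_mono {K : Type*} [Field K] {n : ℕ} {I : Ideal (MvPolynomial (Fin n) K)}
    {a b : Fin n →₀ ℕ} (hab : a ≤ b) (ha : (monomial a (1 : K)) ∈ I) :
    (monomial b (1 : K)) ∈ I := by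
  have : (monomial b (1 : K)) = monomial (b - a) 1 * monomial a 1 := by
    rw [monomial_mul, tsub_add_cancel_of_le hab, one_mul]
  rw [this]
  exact I.mul_mem_left _ ha

/-- a nonzero exponent off `r` -/
lemma aux_stepA {n : ℕ} (P : (Fin n →₀ ℕ) → Prop)
    (hP : ∀ m, P m → ∀ jmax : Fin n, m jmax ≠ 0 → (∀ j, jmax < j → m j = 0) →
        ∀ i : Fin n, i < jmax → P (m + Finsupp.single i 1 - Finsupp.single jmax 1))
    (r : Fin n) (q : ℕ) : ∀ m : Fin n →₀ ℕ, P m → (∀ j, j < r → m j = 0) →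
      m.degree = m r + q → ∃ k, P (Finsupp.single r k) := by
  induction q with
  | zero =>
    intro m hm _ hq
    refine ⟨m r, ?_⟩
    have : m = Finsupp.single r (m r) := by
      have h1 : Finsupp.single r (m r) ≤ m := by simp
      have h2 := tsub_add_cancel_of_le h1
      have h3 : (m - Finsupp.single r (m r)).degree = 0 := by
        have := congrArg Finsupp.degree h2
        rw [map_add, Finsupp.degree_single] at this
        omega
      rw [Finsupp.degree_eq_zero_iff] at h3
      rw [h3, zero_add] at h2
      exact h2.symm
    rwa [← this]
  | succ q ih =>
    intro m hm hr hq
    have hne : m.support.Nonempty := by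
      rw [Finsupp.support_nonempty_iff]
      rintro rfl
      simp at hq
    set j := m.support.max' hne with hj
    have hjm : m j ≠ 0 := Finsupp.mem_support_iff.1 (Finset.max'_mem _ _)
    have hjmax : ∀ l, j < l → m l = 0 := by
      intro l hl
      by_contra hc
      exact absurd (Finset.le_max' m.support l (Finsupp.mem_support_iff.2 hc)) (not_le.2 hl)
    have hrj : r < j := by
      rcases lt_trichotomy r j with h | h | h
      · exact h
      · exfalso
        have : m = Finsupp.single r (m r) := by
          ext l
          rcases lt_trichotomy l r with h' | h' | h'
          · rw [hr l h', Finsupp.single_eq_of_ne h'.ne]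
          · simp [h']
          · rw [hjmax l (h ▸ h'), Finsupp.single_eq_of_ne h'.ne']
        have := congrArg Finsupp.degree this
        rw [Finsupp.degree_single] at this
        omega
      · exact absurd (hr j h) hjm
    have hle : Finsupp.single j 1 ≤ m := by
      simpa using Nat.one_le_iff_ne_zero.2 hjm
    have hle' : Finsupp.single j 1 ≤ m + Finsupp.single r 1 := hle.trans (by simp)
    refine ih _ (hP m hm j hjm hjmax r hrj) ?_ ?_
    · intro l hl
      simp [hr l hl, Finsupp.single_eq_of_ne hl.ne]
    · have := congrArg Finsupp.degree (tsub_add_cancel_of_le hle')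
      rw [map_add, map_add, Finsupp.degree_single, Finsupp.degree_single] at this
      have h2 : (m + Finsupp.single r 1 - Finsupp.single j 1 : Fin n →₀ ℕ) r = m r + 1 := by
        simp [Finsupp.single_eq_of_ne hrj.ne]
      rw [h2]
      omega

lemma aux_stepB {n : ℕ} (P : (Fin n →₀ ℕ) → Prop)
    (hP : ∀ m, P m → ∀ jmax : Fin n, m jmax ≠ 0 → (∀ j, jmax < j → m j = 0) →
        ∀ i : Fin n, i < jmax → P (m + Finsupp.single i 1 - Finsupp.single jmax 1))
    (r i : Fin n) (hi : i < r) (b : ℕ) : ∀ a, P (Finsupp.single i a + Finsupp.single r b) →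
      P (Finsupp.single i (a + b)) := by
  induction b with
  | zero => intro a h; simpa using h
  | succ b ih =>
    intro a h
    have := hP _ h r (by simp) (by
      intro j hj
      simp [Finsupp.single_eq_of_ne hj.ne', Finsupp.single_eq_of_ne (hi.trans hj).ne']) i hi
    have e : Finsupp.single i a + Finsupp.single r (b + 1) + Finsupp.single i 1
        - Finsupp.single r 1 = Finsupp.single i (a + 1) + Finsupp.single r b := by
      rw [Finsupp.single_add r, Finsupp.single_add i]
      rw [show Finsupp.single i a + (Finsupp.single r b + Finsupp.single r 1) + Finsupp.single i 1
        = Finsupp.single i a + Finsupp.single i 1 + Finsupp.single r b + Finsupp.single r 1 by abel]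
      rw [add_tsub_cancel_right]
    rw [e] at this
    have := ih _ this
    rwa [show a + 1 + b = a + (b + 1) by ring] at this

/-- dimension bound -/
lemma aux_dim {K : Type*} [Field K] {n : ℕ} {I : Ideal (MvPolynomial (Fin n) K)}
    {M : Set (Fin n →₀ ℕ)}
    (hM : I = Ideal.span ((fun m => (monomial m (1 : K) : MvPolynomial (Fin n) K)) '' M))
    (r : Fin n) (h : ∀ m ∈ M, ∃ j, j < r ∧ m j ≠ 0) :
    ((n - r.1 : ℕ) : WithBot ℕ∞) ≤ ringKrullDim (MvPolynomial (Fin n) K ⧸ I) := by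
  classical
  let φ : MvPolynomial (Fin n) K →ₐ[K] MvPolynomial {i : Fin n // r ≤ i} K :=
    aeval (fun i => if h : r ≤ i then X ⟨i, h⟩ else 0)
  have hφ : Function.Surjective φ := by
    intro f
    refine ⟨rename Subtype.val f, ?_⟩
    have : (φ.comp (rename Subtype.val)) = AlgHom.id K _ := by
      ext i
      simp [φ, i.2]
    exact DFunLike.congr_fun this f
  have hker : ∀ a ∈ I, φ a = 0 := by
    have : I ≤ RingHom.ker φ := by
      rw [hM, Ideal.span_le]
      rintro _ ⟨m, hm, rfl⟩
      obtain ⟨j, hj, hmj⟩ := h m hm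
      show φ _ = 0
      simp only [φ, aeval_monomial]
      rw [Finsupp.prod, Finset.prod_eq_zero (Finsupp.mem_support_iff.2 hmj)]
      · simp
      · rw [dif_neg (not_le.2 hj), zero_pow hmj]
    exact fun a ha => this ha
  have hs : Function.Surjective (Ideal.Quotient.lift I φ.toRingHom hker) :=
    Ideal.Quotient.lift_surjective_of_surjective I hker hφ
  have := ringKrullDim_le_of_surjective _ hs
  rw [MvPolynomial.ringKrullDim_of_isNoetherianRing, ringKrullDim_eq_zero_of_field, zero_add] at this
  have hc : Nat.card {i : Fin n // r ≤ i} = n - r.1 := by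
    rw [Nat.card_eq_fintype_card, Fintype.card_subtype]
    rw [← Fin.card_Ici]
    congr 1
    ext; simp
  rwa [hc] at this

/-- finiteness -/
lemma aux_finite {K : Type*} [Field K] {n : ℕ} {A : Type*} [CommRing A] [Algebra K A]
    (φ : MvPolynomial (Fin n) K →ₐ[K] A) (hφ : Function.Surjective φ)
    (h : ∀ i, ∃ k, φ (X i) ^ k = 0) : Module.Finite K A := by
  have : Algebra.FiniteType K A := Algebra.FiniteType.of_surjective φ hφ
  have : Algebra.IsIntegral K A := by
    constructor
    intro a
    obtain ⟨f, rfl⟩ := hφ a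
    induction f using MvPolynomial.induction_on with
    | C a => 
      rw [← MvPolynomial.algebraMap_eq, AlgHom.commutes]
      exact isIntegral_algebraMap
    | add p q hp hq => rw [map_add]; exact hp.add hq
    | mul_X p i hp =>
      rw [map_mul]
      refine hp.mul ?_
      obtain ⟨k, hk⟩ := h i
      refine ⟨Polynomial.X ^ k, Polynomial.monic_X_pow k, by simp [hk]⟩
  exact Algebra.IsIntegral.finite

/-- one step of regularity -/
lemma aux_reg {K : Type*} [Field K] {n : ℕ} {I : Ideal (MvPolynomial (Fin n) K)}
    {M : Set (Fin n →₀ ℕ)}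
    (hM : I = Ideal.span ((fun m => (monomial m (1 : K) : MvPolynomial (Fin n) K)) '' M))
    (d : ℕ) (θ : Fin d → MvPolynomial (Fin n) K ⧸ I) (c : Fin d → Fin n)
    (hc : ∀ j, (c j).1 = n - 1 - j.1) (hdn : d ≤ n)
    (hθ : ∀ j, θ j = Ideal.Quotient.mk I (X (c j)))
    (hreg : RingTheory.Sequence.IsRegular (MvPolynomial (Fin n) K ⧸ I) (List.ofFn θ))
    (j : Fin d) (m : Fin n →₀ ℕ) (hm : ∀ l, c j < l → m l = 0)
    (hmem : monomial (m + Finsupp.single (c j) 1) (1 : K) ∈ I) :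
    monomial m (1 : K) ∈ I := by
  have h1 := hreg.toIsWeaklyRegular.regular_mod_prev j.1 (by simp)
  rw [isSMulRegular_quotient_iff_mem_of_smul_mem] at h1
  have h2 := h1 (Ideal.Quotient.mk I (monomial m 1)) (by
    have : (List.ofFn θ)[j.1]'(by simp) • (Ideal.Quotient.mk I (monomial m 1)) = 0 := by
      rw [List.getElem_ofFn, hθ, smul_eq_mul, ← map_mul, Ideal.Quotient.eq_zero_iff_mem, mul_comm]
      rw [X, monomial_mul, one_mul]
      exact hmem
    rw [this]
    exact Submodule.zero_mem _)
  have h3 : Ideal.ofList (List.take j.1 (List.ofFn θ)) ≤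
      Ideal.map (Ideal.Quotient.mk I) (Ideal.span
        ((fun m => (monomial m (1 : K) : MvPolynomial (Fin n) K)) ''
          ((fun l => Finsupp.single l 1) '' {l | c j < l}))) := by
    rw [Ideal.ofList, Ideal.span_le]
    intro x hx
    have hx : x ∈ List.take j.1 (List.ofFn θ) := hx
    rw [List.mem_take_iff_getElem] at hx
    obtain ⟨i, hi, rfl⟩ := hx
    have hij : i < j.1 := by omega
    rw [List.getElem_ofFn, hθ]
    apply Ideal.mem_map_of_mem
    apply Ideal.subset_span
    refine ⟨_, ⟨c ⟨i, by omega⟩, ?_, rfl⟩, rfl⟩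
    show c j < c _
    rw [Fin.lt_def, hc, hc]
    simp only
    omega
  have h4 : Ideal.Quotient.mk I (monomial m 1) ∈ Ideal.map (Ideal.Quotient.mk I) (Ideal.span
        ((fun m => (monomial m (1 : K) : MvPolynomial (Fin n) K)) ''
          ((fun l => Finsupp.single l 1) '' {l | c j < l}))) := by
    apply h3
    simpa using h2
  rw [← Ideal.mem_comap, Ideal.comap_map_of_surjective _ Ideal.Quotient.mk_surjective,
    ← RingHom.ker_eq_comap_bot, Ideal.mk_ker] at h4
  have h5 : Ideal.span
        ((fun m => (monomial m (1 : K) : MvPolynomial (Fin n) K)) ''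
          ((fun l => Finsupp.single l 1) '' {l | c j < l})) ⊔ I = Ideal.span
        ((fun m => (monomial m (1 : K) : MvPolynomial (Fin n) K)) ''
          (((fun l => Finsupp.single l 1) '' {l | c j < l}) ∪ M)) := by
    rw [Set.image_union, Ideal.span_union, ← hM]
  rw [aux_mem_iff h5] at h4
  obtain ⟨s, hs | hs, hsm⟩ := h4
  · obtain ⟨l, hl, rfl⟩ := hs
    have := hsm l
    simp [hm l hl] at this
  · exact (aux_mem_iff hM m).2 ⟨s, hs, hsm⟩

/-- removing the last variables -/
lemma aux_remove {n : ℕ} (P : (Fin n →₀ ℕ) → Prop) (r : ℕ)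
    (hP : ∀ (k : Fin n) (m : Fin n →₀ ℕ), r ≤ k.1 → (∀ l, k < l → m l = 0) →
      P (m + Finsupp.single k 1) → P m) (q : ℕ) :
    ∀ m : Fin n →₀ ℕ, m.degree = q → P m → P (m.filter (fun i => i.1 < r)) := by
  induction q with
  | zero =>
    intro m hq hm
    rw [Finsupp.degree_eq_zero_iff] at hq
    subst hq
    have e : (0 : Fin n →₀ ℕ).filter (fun i => i.1 < r) = 0 := Finsupp.filter_zero _
    rwa [e]
  | succ q ih =>
    intro m hq hm
    have hne : m.support.Nonempty := by
      rw [Finsupp.support_nonempty_iff]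
      rintro rfl
      simp at hq
    set j := m.support.max' hne with hj
    have hjm : m j ≠ 0 := Finsupp.mem_support_iff.1 (Finset.max'_mem _ _)
    have hjmax : ∀ l, j < l → m l = 0 := by
      intro l hl
      by_contra hc
      exact absurd (Finset.le_max' m.support l (Finsupp.mem_support_iff.2 hc)) (not_le.2 hl)
    by_cases hrj : r ≤ j.1
    · have hle : Finsupp.single j 1 ≤ m := by
        simpa using Nat.one_le_iff_ne_zero.2 hjm
      have he := tsub_add_cancel_of_le hle
      have h1 : P (m - Finsupp.single j 1) := by
        refine hP j _ hrj ?_ (by rwa [he])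
        intro l hl
        simp [hjmax l hl]
      have hd := congrArg Finsupp.degree he
      rw [map_add, Finsupp.degree_single] at hd
      have h2 := ih _ (by omega) h1
      convert h2 using 1
      ext l
      by_cases hl : l.1 < r
      · have : l ≠ j := by rintro rfl; omega
        simp [Finsupp.filter_apply, hl, Finsupp.single_eq_of_ne this]
      · simp [Finsupp.filter_apply, hl]
    · have : m.filter (fun i => i.1 < r) = m := by
        rw [Finsupp.filter_eq_self_iff]
        intro l hl
        have := Finset.le_max' m.support l (Finsupp.mem_support_iff.2 hl)
        have : l ≤ j := this
        rw [Fin.le_def] at this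
        omega
      rwa [this]

lemma aux_finite_deg (n i : ℕ) : {m : Fin n →₀ ℕ | m.degree = i}.Finite := by
  refine Set.Finite.subset (Set.finite_Iic (Finsupp.equivFunOnFinite.symm (fun _ : Fin n => i))) ?_
  intro m hm l
  have : m.degree = i := hm
  rw [← this]
  exact Finsupp.le_degree l m

/-- Hilbert function -/
lemma aux_hilb {K : Type*} [Field K] {n : ℕ} {I : Ideal (MvPolynomial (Fin n) K)}
    {M : Set (Fin n →₀ ℕ)}
    (hM : I = Ideal.span ((fun m => (monomial m (1 : K) : MvPolynomial (Fin n) K)) '' M))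
    (i : ℕ) :
    Module.finrank K (Submodule.map (Ideal.Quotient.mkₐ K I).toLinearMap
          (homogeneousSubmodule (Fin n) K i)) =
      {m : Fin n →₀ ℕ | m.degree = i ∧ monomial m (1 : K) ∉ I}.ncard := by
  classical
  set T := {m : Fin n →₀ ℕ | m.degree = i ∧ monomial m (1 : K) ∉ I} with hT
  have hfin : T.Finite := (aux_finite_deg n i).subset (fun m hm => hm.1)
  have : Fintype T := hfin.fintype
  let v : T → MvPolynomial (Fin n) K := fun m => monomial m.1 1
  have hv : LinearIndependent K v := by
    have h := (basisMonomials (Fin n) K).linearIndependent.comp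
      (Subtype.val : T → (Fin n →₀ ℕ)) Subtype.val_injective
    have e : v = (basisMonomials (Fin n) K) ∘ (Subtype.val : T → (Fin n →₀ ℕ)) := by
      ext1 m
      simp [v]
    rw [e]
    exact h
  have hspan : Submodule.span K (Set.range v) = restrictSupport K T := by
    rw [restrictSupport_eq_span, Set.image_eq_range]
  have hf : LinearIndependent K ((Ideal.Quotient.mkₐ K I).toLinearMap ∘ v) := by
    refine hv.map ?_
    rw [Submodule.disjoint_def, hspan]
    intro x hx hx'
    have hxI : x ∈ I := by
      rw [LinearMap.mem_ker] at hx'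
      exact Ideal.Quotient.eq_zero_iff_mem.1 hx'
    rw [aux_mem_iff' hM] at hxI
    rw [mem_restrictSupport_iff] at hx
    by_contra hne
    obtain ⟨m, hm⟩ := support_nonempty.2 hne
    exact (hx hm).2 (hxI m hm)
  have hrange : Submodule.map (Ideal.Quotient.mkₐ K I).toLinearMap
          (homogeneousSubmodule (Fin n) K i) =
      Submodule.span K (Set.range ((Ideal.Quotient.mkₐ K I).toLinearMap ∘ v)) := by
    have : homogeneousSubmodule (Fin n) K i = restrictSupport K {m | m.degree = i} := by
      exact homogeneousSubmodule_eq_finsupp_supported (σ := Fin n) (R := K) i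
    rw [this, restrictSupport_eq_span, Submodule.map_span]
    apply le_antisymm
    · rw [Submodule.span_le]
      rintro _ ⟨_, ⟨m, hm, rfl⟩, rfl⟩
      by_cases hmI : monomial m (1 : K) ∈ I
      · have : (Ideal.Quotient.mkₐ K I).toLinearMap (monomial m (1 : K)) = 0 :=
          Ideal.Quotient.eq_zero_iff_mem.2 hmI
        simp only [this]
        exact Submodule.zero_mem _
      · exact Submodule.subset_span ⟨⟨m, hm, hmI⟩, rfl⟩
    · apply Submodule.span_mono
      rintro _ ⟨m, rfl⟩
      exact ⟨_, ⟨m.1, m.2.1, rfl⟩, rfl⟩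
  rw [hrange, finrank_span_eq_card hf, ← Nat.card_eq_fintype_card]
  rfl

/-- standard monomials in the first `t` variables -/
def auxT {n : ℕ} (P : (Fin n →₀ ℕ) → Prop) (t i : ℕ) : Set (Fin n →₀ ℕ) :=
  {m | m.degree = i ∧ ¬ P m ∧ ∀ l : Fin n, t ≤ l.1 → m l = 0}

lemma auxT_finite {n : ℕ} (P : (Fin n →₀ ℕ) → Prop) (t i : ℕ) : (auxT P t i).Finite :=
  (aux_finite_deg n i).subset (fun _ hm => hm.1)

lemma auxT_step {n : ℕ} (P : (Fin n →₀ ℕ) → Prop) (t : ℕ) (ht : t < n)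
    (hP : ∀ m, P (m + Finsupp.single ⟨t, ht⟩ 1) ↔ P m) (i : ℕ) :
    (auxT P (t + 1) (i + 1)).ncard = (auxT P t (i + 1)).ncard + (auxT P (t + 1) i).ncard := by
  have hinj : Function.Injective (fun m : Fin n →₀ ℕ => m + Finsupp.single ⟨t, ht⟩ 1) :=
    add_left_injective _
  have hU : auxT P (t + 1) (i + 1) = auxT P t (i + 1) ∪
      (fun m : Fin n →₀ ℕ => m + Finsupp.single ⟨t, ht⟩ 1) '' auxT P (t + 1) i := by
    ext m
    constructor
    · rintro ⟨h1, h2, h3⟩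
      by_cases h0 : m ⟨t, ht⟩ = 0
      · left
        refine ⟨h1, h2, fun l hl => ?_⟩
        rcases Nat.eq_or_lt_of_le hl with h | h
        · have : l = ⟨t, ht⟩ := Fin.ext h.symm
          rwa [this]
        · exact h3 l h
      · right
        have hle : Finsupp.single ⟨t, ht⟩ 1 ≤ m := by
          simpa using Nat.one_le_iff_ne_zero.2 h0
        have he := tsub_add_cancel_of_le hle
        refine ⟨m - Finsupp.single ⟨t, ht⟩ 1, ⟨?_, ?_, ?_⟩, he⟩
        · have hd := congrArg Finsupp.degree he
          rw [map_add, Finsupp.degree_single] at hd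
          omega
        · rw [← hP, he]; exact h2
        · intro l hl
          simp [h3 l hl]
    · rintro (⟨h1, h2, h3⟩ | ⟨m, ⟨h1, h2, h3⟩, rfl⟩)
      · exact ⟨h1, h2, fun l hl => h3 l (by omega)⟩
      · refine ⟨by simp [h1], by simpa [hP] using h2, fun l hl => ?_⟩
        have : l ≠ ⟨t, ht⟩ := by rintro rfl; simp at hl
        simp [h3 l hl, Finsupp.single_eq_of_ne this]
  rw [hU, Set.ncard_union_eq _ (auxT_finite _ _ _) ((auxT_finite _ _ _).image _),
    Set.ncard_image_of_injective _ hinj]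
  rw [Set.disjoint_left]
  rintro _ ⟨_, _, h3⟩ ⟨m, _, rfl⟩
  have := h3 ⟨t, ht⟩ le_rfl
  simp at this

lemma auxT_zero {n : ℕ} (P : (Fin n →₀ ℕ) → Prop) (t t' : ℕ) : auxT P t 0 = auxT P t' 0 := by
  ext m
  simp only [auxT, Finsupp.degree_eq_zero_iff, Set.mem_ofPred_eq]
  constructor <;> rintro ⟨rfl, h, _⟩ <;> simp [h]

lemma auxT_series {n : ℕ} (P : (Fin n →₀ ℕ) → Prop) (t : ℕ) (ht : t < n)
    (hP : ∀ m, P (m + Finsupp.single ⟨t, ht⟩ 1) ↔ P m) :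
    (PowerSeries.mk fun i => ((auxT P (t + 1) i).ncard : ℤ)) * (1 - PowerSeries.X) =
      PowerSeries.mk fun i => ((auxT P t i).ncard : ℤ) := by
  ext i
  rw [mul_sub, mul_one, map_sub]
  cases i with
  | zero => simp [auxT_zero P (t + 1) t]
  | succ i =>
    rw [PowerSeries.coeff_succ_mul_X]
    simp [auxT_step P t ht hP]

lemma auxT_series_all {n : ℕ} (P : (Fin n →₀ ℕ) → Prop) (r : ℕ)
    (hP : ∀ (k : Fin n) m, r ≤ k.1 → (P (m + Finsupp.single k 1) ↔ P m)) (d : ℕ)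
    (hd : r + d ≤ n) :
    (PowerSeries.mk fun i => ((auxT P (r + d) i).ncard : ℤ)) * (1 - PowerSeries.X) ^ d =
      PowerSeries.mk fun i => ((auxT P r i).ncard : ℤ) := by
  induction d with
  | zero => simp
  | succ d ih =>
    rw [pow_succ', ← mul_assoc, ← add_assoc,
      auxT_series P (r + d) (by omega) (fun m => hP _ m (by simp)), ih (by omega)]

lemma aux_exists_le {n : ℕ} (k : ℕ) (m : Fin n →₀ ℕ) (h : k ≤ m.degree) :
    ∃ m0 ≤ m, m0.degree = k := by
  induction k with
  | zero => exact ⟨0, zero_le, by simp⟩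
  | succ k ih =>
    obtain ⟨m0, hle, hd⟩ := ih (by omega)
    have he := tsub_add_cancel_of_le hle
    have hdeg := congrArg Finsupp.degree he
    rw [map_add] at hdeg
    have hne : m - m0 ≠ 0 := by
      intro h0
      rw [h0] at hdeg
      simp at hdeg
      omega
    obtain ⟨l, hl⟩ := Finsupp.ne_iff.1 hne
    refine ⟨m0 + Finsupp.single l 1, ?_, by simp [hd]⟩
    rw [← he, add_comm]
    gcongr
    simpa using Nat.one_le_iff_ne_zero.2 hl

/-- **Lemma 3.3(ii), Kubitzke–Murai.**
Let `S = K[x₁,…,x_n]` and let `I ⊆ S` be a stable monomial ideal such that `S/I` is a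
Cohen-Macaulay graded `K`-algebra of Krull dimension `d` (Cohen-Macaulayness being expressed
by the statement that every linear system of parameters is a regular sequence).  Then
`x_n, x_{n-1}, …, x_{n-d+1}` is a linear system of parameters for `S/I` (they are degree-one
elements and the quotient by them is a finite-dimensional `K`-vector space), and `I` is
generated by monomials of degree `≤ deg h_{S/I}(t) + 1`, where `h = h_{S/I}(t)` is the
`h`-polynomial of `S/I`, i.e. `Hilb(S/I, t) = h/(1-t)^d`.
(The variable `x_i` of the paper corresponds to the index `i - 1 : Fin n`, so the `j`-th
element of the sequence, `j = 0,…,d-1`, is `x_{n-j}`, of index `n-1-j`.) -/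
theorem stable_ideal_lsop_and_generators
    (K : Type*) [Field K] (n : ℕ)
    (I : Ideal (MvPolynomial (Fin n) K))
    (hI : IsStableMonomialIdeal I)
    (d : ℕ) (hdn : d ≤ n)
    (hdim : ringKrullDim (MvPolynomial (Fin n) K ⧸ I) = d)
    (hCM : ∀ θ' : Fin d → MvPolynomial (Fin n) K ⧸ I,
      (∀ j, θ' j ∈ Submodule.map (Ideal.Quotient.mkₐ K I).toLinearMap
        (homogeneousSubmodule (Fin n) K 1)) →
      Module.Finite K ((MvPolynomial (Fin n) K ⧸ I) ⧸ Ideal.span (Set.range θ')) →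
      RingTheory.Sequence.IsRegular (MvPolynomial (Fin n) K ⧸ I) (List.ofFn θ'))
    (h : Polynomial ℤ)
    (hh : (h : PowerSeries ℤ) =
      (PowerSeries.mk fun i => (Module.finrank K
        (Submodule.map (Ideal.Quotient.mkₐ K I).toLinearMap
          (homogeneousSubmodule (Fin n) K i)) : ℤ)) * (1 - PowerSeries.X) ^ d) :
    letI ϑ : Fin d → MvPolynomial (Fin n) K ⧸ I := fun j =>
      Ideal.Quotient.mk I (X ⟨n - 1 - j.1, by have := j.2; omega⟩)
    ((∀ j, ϑ j ∈ Submodule.map (Ideal.Quotient.mkₐ K I).toLinearMap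
        (homogeneousSubmodule (Fin n) K 1)) ∧
      Module.Finite K ((MvPolynomial (Fin n) K ⧸ I) ⧸ Ideal.span (Set.range ϑ))) ∧
    ∃ M : Set (Fin n →₀ ℕ),
      (∀ m ∈ M, m.degree ≤ h.natDegree + 1) ∧
      I = Ideal.span ((fun m => (monomial m (1 : K) : MvPolynomial (Fin n) K)) '' M) := by
  let ϑ : Fin d → MvPolynomial (Fin n) K ⧸ I := fun j =>
    Ideal.Quotient.mk I (X ⟨n - 1 - j.1, by have := j.2; omega⟩)
  obtain ⟨⟨M, hM⟩, hst⟩ := hI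
  have hlin : ∀ j, ϑ j ∈ Submodule.map (Ideal.Quotient.mkₐ K I).toLinearMap
        (homogeneousSubmodule (Fin n) K 1) := fun j =>
    ⟨X _, isHomogeneous_X K _, rfl⟩
  have hpow : ∀ i : Fin n, i.1 < n - d → ∃ k, (X i : MvPolynomial (Fin n) K) ^ k ∈ I := by
    intro i hi
    have hr : n - d - 1 < n := by omega
    have key : ∃ k, monomial (Finsupp.single (⟨n - d - 1, hr⟩ : Fin n) k) (1 : K) ∈ I := by
      by_contra hc
      have hall : ∀ m ∈ M, ∃ j, j < (⟨n - d - 1, hr⟩ : Fin n) ∧ m j ≠ 0 := by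
        intro m hm
        by_contra hc2
        push Not at hc2
        refine hc (aux_stepA (fun m => monomial m (1 : K) ∈ I) hst ⟨n - d - 1, hr⟩
          (m.degree - m ⟨n - d - 1, hr⟩) m ((aux_mem_iff hM m).2 ⟨m, hm, le_rfl⟩) hc2 ?_)
        have := Finsupp.le_degree (⟨n - d - 1, hr⟩ : Fin n) m
        omega
      have := aux_dim hM ⟨n - d - 1, hr⟩ hall
      rw [hdim] at this
      have : n - (n - d - 1) ≤ d := by exact_mod_cast this
      omega
    obtain ⟨k, hk⟩ := key
    refine ⟨k, ?_⟩
    rw [X_pow_eq_monomial]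
    by_cases hir : i < ⟨n - d - 1, hr⟩
    · have := aux_stepB (fun m => monomial m (1 : K) ∈ I) hst ⟨n - d - 1, hr⟩ i hir k 0
        (by simpa using hk)
      simpa using this
    · have : i = ⟨n - d - 1, hr⟩ := by
        rw [Fin.lt_def] at hir
        apply Fin.ext
        simp only at hir ⊢
        omega
      rwa [this]
  have hfin : Module.Finite K ((MvPolynomial (Fin n) K ⧸ I) ⧸ Ideal.span (Set.range ϑ)) := by
    let φ : MvPolynomial (Fin n) K →ₐ[K]
        ((MvPolynomial (Fin n) K ⧸ I) ⧸ Ideal.span (Set.range ϑ)) :=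
      (Ideal.Quotient.mkₐ K (Ideal.span (Set.range ϑ))).comp (Ideal.Quotient.mkₐ K I)
    have hsurj : Function.Surjective φ :=
      (Ideal.Quotient.mkₐ_surjective K (Ideal.span (Set.range ϑ))).comp
        (Ideal.Quotient.mkₐ_surjective K I)
    have hff := aux_finite (n := n) (A := (MvPolynomial (Fin n) K ⧸ I) ⧸ Ideal.span (Set.range ϑ)) φ hsurj
    refine hff ?_
    intro i
    by_cases hi : i.1 < n - d
    · obtain ⟨k, hk⟩ := hpow i hi
      refine ⟨k, ?_⟩
      rw [← map_pow]
      show Ideal.Quotient.mk _ (Ideal.Quotient.mk I (X i ^ k)) = 0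
      rw [Ideal.Quotient.eq_zero_iff_mem.2 hk, map_zero]
    · refine ⟨1, ?_⟩
      rw [pow_one]
      show Ideal.Quotient.mk _ (Ideal.Quotient.mk I (X i)) = 0
      rw [Ideal.Quotient.eq_zero_iff_mem]
      apply Ideal.subset_span
      refine ⟨⟨n - 1 - i.1, by omega⟩, ?_⟩
      show Ideal.Quotient.mk I (X _) = _
      congr 2
      apply Fin.ext
      simp only
      omega
  refine ⟨⟨hlin, hfin⟩, ?_⟩
  have hreg := hCM ϑ hlin hfin
  have hrem : ∀ m, monomial m (1 : K) ∈ I →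
      monomial (m.filter (fun i => i.1 < n - d)) (1 : K) ∈ I := by
    intro m hm
    refine aux_remove (fun m => monomial m (1 : K) ∈ I) (n - d) ?_ _ m rfl hm
    intro k m hk hm hmem
    have hck : (⟨n - 1 - (n - 1 - k.1), by omega⟩ : Fin n) = k := by
      apply Fin.ext
      simp only
      omega
    refine aux_reg hM d ϑ (fun j => ⟨n - 1 - j.1, by have := j.2; omega⟩) (fun j => rfl) hdn
      (fun j => rfl) hreg ⟨n - 1 - k.1, by omega⟩ m ?_ ?_
    · simp only [hck]; exact hm
    · simp only [hck]; exact hmem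
  have hfle : ∀ m : Fin n →₀ ℕ, m.filter (fun i => i.1 < n - d) ≤ m := by
    intro m l
    rw [Finsupp.filter_apply]
    split_ifs <;> simp
  have hiff : ∀ (k : Fin n) (m : Fin n →₀ ℕ), n - d ≤ k.1 →
      (monomial (m + Finsupp.single k 1) (1 : K) ∈ I ↔ monomial m (1 : K) ∈ I) := by
    intro k m hk
    refine ⟨fun hm => ?_, aux_mono (by simp)⟩
    refine aux_mono ?_ (hrem _ hm)
    intro l
    rw [Finsupp.filter_apply]
    split_ifs with hl
    · have : l ≠ k := by rintro rfl; omega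
      simp [Finsupp.single_eq_of_ne this]
    · simp
  have hser := auxT_series_all (fun m => monomial m (1 : K) ∈ I) (n - d) hiff d (by omega)
  have hhs : (h : PowerSeries ℤ) =
      PowerSeries.mk fun i => ((auxT (fun m => monomial m (1 : K) ∈ I) (n - d) i).ncard : ℤ) := by
    rw [hh, ← hser]
    congr 2
    ext i
    rw [aux_hilb hM, Nat.sub_add_cancel hdn]
    congr 2
    ext m
    simp only [auxT, Set.mem_ofPred_eq]
    constructor
    · rintro ⟨h1, h2⟩
      exact ⟨h1, h2, fun l hl => absurd l.2 (by omega)⟩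
    · rintro ⟨h1, h2, _⟩
      exact ⟨h1, h2⟩
  have hall : ∀ m : Fin n →₀ ℕ, m.degree = h.natDegree + 1 →
      (∀ l : Fin n, n - d ≤ l.1 → m l = 0) → monomial m (1 : K) ∈ I := by
    intro m hm hl
    have h1 := congrArg (PowerSeries.coeff (h.natDegree + 1)) hhs
    rw [Polynomial.coeff_coe, Polynomial.coeff_natDegree_succ_eq_zero, PowerSeries.coeff_mk] at h1
    have h2 : (auxT (fun m => monomial m (1 : K) ∈ I) (n - d) (h.natDegree + 1)).ncard = 0 := by
      exact_mod_cast h1.symm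
    rw [Set.ncard_eq_zero (auxT_finite _ _ _)] at h2
    by_contra hc
    have : m ∈ auxT (fun m => monomial m (1 : K) ∈ I) (n - d) (h.natDegree + 1) := ⟨hm, hc, hl⟩
    rw [h2] at this
    exact this
  refine ⟨{m | monomial m (1 : K) ∈ I ∧ m.degree ≤ h.natDegree + 1}, fun m hm => hm.2, ?_⟩
  apply le_antisymm
  · conv_lhs => rw [hM]
    rw [Ideal.span_le]
    rintro _ ⟨m, hm, rfl⟩
    have hmI : monomial m (1 : K) ∈ I := (aux_mem_iff hM m).2 ⟨m, hm, le_rfl⟩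
    refine (aux_mem_iff rfl m).2 ?_
    by_cases hdeg : (m.filter (fun i => i.1 < n - d)).degree ≤ h.natDegree + 1
    · exact ⟨_, ⟨hrem m hmI, hdeg⟩, hfle m⟩
    · obtain ⟨m0, hle, hd0⟩ := aux_exists_le (h.natDegree + 1)
        (m.filter (fun i => i.1 < n - d)) (by omega)
      refine ⟨m0, ⟨hall m0 hd0 ?_, hd0.le⟩, hle.trans (hfle m)⟩
      intro l hl
      have := hle l
      rw [Finsupp.filter_apply, if_neg (by omega)] at this
      omega
  · rw [Ideal.span_le]
    rintro _ ⟨m, hm, rfl⟩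
    exact hm.1
end
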